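/- Let $(M,\langle\,,\,\rangle)$ be a connected, complete, non-compact (smooth) Riemannian manifold of dimension $m\ge 2$. Fix $o\in M$, write $r(x)=\mathrm{dist}(o,x)$ and let $B_R$ be the open geodesic ball of radius $R$ centered at $o$. Let $\Omega\subseteq M$ be a non-empty open set and $X:\Omega\to TM$ a $C^1$ vector field with $|X|\le k$ on $\Omega$ for some constant $k>0$. Let $\mu\in[0,1]$ and $\beta>0$, and let $b\in C(M)$ be a positive function satisfying $$\liminf_{r(x)\to+\infty} r(x)^\mu b(x)\ge\beta \ \text{ if } 0<\mu\le 1,\qquad b(x)\ge\beta \ \text{ for all } x\in M \ \text{ if } \mu=0.$$ Let $\psi\in C^1(\Omega)\cap C(\overline\Omega)$ satisfy $\langle\nabla\psi,X\rangle\ge 0$ on $\Omega$ and, for some $h\in C^1(\Omega)$, $\operatorname{div}_h X\ge b\,\psi$ on $\Omega$, where $\operatorname{div}_h X=\operatorname{div}X-\langle\nabla h,X\rangle$. Put $w=e^{-h}$ and $$c^w_\mu(\Omega)=\liminf_{R\to+\infty}\frac{(1-\mu)\log\int_{B_R\cap\Omega}w}{R^{1-\mu}}\ \text{ if } 0\le\mu<1,\qquad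 c^w_\mu(\Omega)=\liminf_{R\to+\infty}\frac{\log\int_{B_R\cap\Omega}w}{\log R}\ \text{ if } \mu=1,$$ where the integrals are taken with respect to the Riemannian volume, may be infinite, and $\log(+\infty)=+\infty$. Then $$\sup_\Omega\psi\le\max\Big\{\frac{k}{\beta}\,c^w_\mu(\Omega),\ \sup_{\partial\Omega}\psi\Big\}$$ in $[-\infty,+\infty]$, where $\sup_{\partial\Omega}\psi=-\infty$ if $\partial\Omega=\emptyset$. -/

import Mathlib

open MeasureTheory Metric Filter Set Bundle
open scoped Manifold ContDiff ENNReal Topology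

noncomputable section

namespace RiemDrift

/-- The model space `ℝᵐ` with its Euclidean norm. -/
abbrev Euc (m : ℕ) := EuclideanSpace ℝ (Fin m)

section Local

variable {m : ℕ} {M : Type*} [TopologicalSpace M] [ChartedSpace (Euc m) M]

/-- The coordinate vector field `∂ᵢ` of the chart `φ` around `p`, at the point with coordinates `y`:
the image of the `i`-th basis vector under the differential of `φ⁻¹` at `y`. -/
def coordVec (p : M) (i : Fin m) (y : Euc m) :
    TangentSpace (𝓡 m) ((chartAt (Euc m) p).symm y) :=
  mfderiv (𝓡 m) (𝓡 m) (chartAt (Euc m) p).symm y (EuclideanSpace.single i (1 : ℝ) : Euc m)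

/-- The `i`-th component, in the chart `φ` around `p`, of the vector field `X`, at the point with
coordinates `y`: the `i`-th coordinate of `dφ(X)`. -/
def coordComp (p : M) (X : ∀ x : M, TangentSpace (𝓡 m) x) (i : Fin m) (y : Euc m) : ℝ :=
  let v : Euc m := mfderiv (𝓡 m) (𝓡 m) (chartAt (Euc m) p) ((chartAt (Euc m) p).symm y)
    (X ((chartAt (Euc m) p).symm y))
  v i

variable [RiemannianBundle (fun x : M => TangentSpace (𝓡 m) x)]

/-- The matrix `gᵢⱼ = ⟨∂ᵢ, ∂ⱼ⟩` of the metric in the chart around `p`. -/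
def gram (p : M) (y : Euc m) : Matrix (Fin m) (Fin m) ℝ :=
  Matrix.of fun i j => inner ℝ (coordVec p i y) (coordVec p j y)

/-- The volume density `√(det gᵢⱼ)` in the chart around `p`. -/
def volDensity (p : M) (y : Euc m) : ℝ := √(gram p y).det

/-- The Riemannian divergence, in the coordinates of the chart around `x`:
`div X = (1/√g) ∑ᵢ ∂ᵢ(√g Xⁱ)`. -/
def rdiv (X : ∀ x : M, TangentSpace (𝓡 m) x) (x : M) : ℝ :=
  (volDensity x (chartAt (Euc m) x x))⁻¹ *
    ∑ i : Fin m, fderiv ℝ (fun y : Euc m => volDensity x y * coordComp x X i y)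
      (chartAt (Euc m) x x) (EuclideanSpace.single i 1)

/-- The Riemannian gradient of `f` at `x`: the vector representing the differential `df` with
respect to the inner product of the tangent space. -/
def rgrad (f : M → ℝ) (x : M) : TangentSpace (𝓡 m) x :=
  haveI : FiniteDimensional ℝ (TangentSpace (𝓡 m) x) :=
    inferInstanceAs (FiniteDimensional ℝ (Euc m))
  haveI : CompleteSpace (TangentSpace (𝓡 m) x) := FiniteDimensional.complete ℝ _
  (InnerProductSpace.toDual ℝ (TangentSpace (𝓡 m) x)).symm (mfderiv (𝓡 m) 𝓘(ℝ, ℝ) f x)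

/-- The drift divergence `div_h X = div X - ⟨∇h, X⟩`. -/
def driftDiv (h : M → ℝ) (X : ∀ x : M, TangentSpace (𝓡 m) x) (x : M) : ℝ :=
  rdiv X x - inner ℝ (rgrad h x) (X x)

variable (m) in
/-- The Riemannian measure on the domain of the chart `φ` around `p` (extended by zero): the image
under `φ⁻¹` of the measure `√(det gᵢⱼ) dy` on the range of `φ`. -/
def chartVol [MeasurableSpace M] (p : M) : Measure M :=
  ((volume.restrict (chartAt (Euc m) p).target).withDensity
    (fun y => ENNReal.ofReal (volDensity p y))).map (chartAt (Euc m) p).symm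

variable (m M) in
/-- The Riemannian volume measure: the least measure that dominates the Riemannian measures of all
chart domains. As these agree on overlaps, it restricts to each of them on its chart domain. -/
def rvol [MeasurableSpace M] : Measure M := ⨆ p : M, chartVol m p

end Local

section Global

variable {M : Type*} [MetricSpace M]

/-- The weighted parameter `c^w_μ(Ω)` with base point `o`, for the volume measure `vol`. It takes
values in the extended reals; the integral of the positive weight `w` may be infinite, and then its
logarithm is `+∞`. -/
def cw [MeasurableSpace M] (vol : Measure M) (o : M) (μ : ℝ) (w : M → ℝ) (Ω : Set M) : EReal :=
  if μ = 1 then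
    liminf (fun R : ℝ =>
      ENNReal.log (∫⁻ x in ball o R ∩ Ω, ENNReal.ofReal (w x) ∂vol) / ((Real.log R : ℝ) : EReal))
      atTop
  else
    liminf (fun R : ℝ =>
      ((1 - μ : ℝ) : EReal) * ENNReal.log (∫⁻ x in ball o R ∩ Ω, ENNReal.ofReal (w x) ∂vol) /
        ((R ^ (1 - μ) : ℝ) : EReal))
      atTop

/-- Condition (B) for the parameters `μ` and `β`, with `r(x) = dist o x`. -/
def CondB (o : M) (μ β : ℝ) (b : M → ℝ) : Prop :=
  if μ = 0 then ∀ x, β ≤ b x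
  else (β : EReal) ≤
    liminf (fun x => ((dist o x ^ μ * b x : ℝ) : EReal)) (comap (fun x => dist o x) atTop)

end Global

end RiemDrift

end

noncomputable section

namespace RiemDrift

section ChartCalculus

variable {m : ℕ} {M : Type*} [TopologicalSpace M] [ChartedSpace (Euc m) M]

/-- The differential of the inverse of the chart around `p`, as an endomorphism of `ℝᵐ`. -/
def symmDeriv (p : M) (y : Euc m) : Euc m →L[ℝ] Euc m :=
  mfderiv (𝓡 m) (𝓡 m) (chartAt (Euc m) p).symm y

/-- The differential of the chart around `p`, as an endomorphism of `ℝᵐ`. -/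
def chartDeriv (p x : M) : Euc m →L[ℝ] Euc m :=
  mfderiv (𝓡 m) (𝓡 m) (chartAt (Euc m) p) x

/-- The change of coordinates from the chart around `p` to the chart around `q`. -/
def transition (m : ℕ) {M : Type*} [TopologicalSpace M] [ChartedSpace (Euc m) M] (p q : M) :
    Euc m → Euc m :=
  fun y => chartAt (Euc m) q ((chartAt (Euc m) p).symm y)

variable [IsManifold (𝓡 m) ∞ M]

lemma chartDeriv_symmDeriv {p : M} {y : Euc m} (hy : y ∈ (chartAt (Euc m) p).target) (v : Euc m) :
    chartDeriv p ((chartAt (Euc m) p).symm y) (symmDeriv p y v) = v := by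
  have := (mdifferentiable_chart (I := 𝓡 m) p).comp_symm_deriv hy
  exact congrArg (fun L => L v) this

lemma symmDeriv_chartDeriv {p x : M} (hx : x ∈ (chartAt (Euc m) p).source) (v : Euc m) :
    symmDeriv p (chartAt (Euc m) p x) (chartDeriv p x v) = v := by
  have := (mdifferentiable_chart (I := 𝓡 m) p).symm_comp_deriv hx
  exact congrArg (fun L => L v) this

lemma symmDeriv_chartDeriv' {p : M} {y : Euc m} (hy : y ∈ (chartAt (Euc m) p).target) (v : Euc m) :
    symmDeriv p y (chartDeriv p ((chartAt (Euc m) p).symm y) v) = v := by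
  have := symmDeriv_chartDeriv ((chartAt (Euc m) p).map_target hy) v
  rwa [(chartAt (Euc m) p).right_inv hy] at this

lemma hasFDerivAt_transition {p q : M} {y : Euc m} (hy : y ∈ (chartAt (Euc m) p).target)
    (hq : (chartAt (Euc m) p).symm y ∈ (chartAt (Euc m) q).source) :
    HasFDerivAt (transition m p q)
      ((chartDeriv q ((chartAt (Euc m) p).symm y)).comp (symmDeriv p y)) y := by
  have h1 := ((mdifferentiable_chart (I := 𝓡 m) p).mdifferentiableAt_symm hy).hasMFDerivAt
  have h2 := ((mdifferentiable_chart (I := 𝓡 m) q).mdifferentiableAt hq).hasMFDerivAt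
  exact (h2.comp y h1).hasFDerivAt

lemma symmDeriv_eq_transition {p q : M} {y : Euc m} (hy : y ∈ (chartAt (Euc m) p).target)
    (hq : (chartAt (Euc m) p).symm y ∈ (chartAt (Euc m) q).source) (v : Euc m) :
    symmDeriv p y v =
      symmDeriv q (transition m p q y) (fderiv ℝ (transition m p q) y v) := by
  rw [(hasFDerivAt_transition hy hq).fderiv]
  exact (symmDeriv_chartDeriv hq _).symm

lemma contMDiffOn_coordVec (p : M) (v : Euc m) :
    ContMDiffOn (𝓡 m) (𝓡 m).tangent 1
      (fun y => (⟨(chartAt (Euc m) p).symm y, symmDeriv p y v⟩ : TangentBundle (𝓡 m) M))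
      (chartAt (Euc m) p).target := by
  have h1 : ContMDiffOn (𝓡 m) (𝓡 m) 2 (chartAt (Euc m) p).symm (chartAt (Euc m) p).target :=
    (contMDiffOn_chart_symm (n := ∞)).of_le (by norm_cast)
  have h2 := h1.contMDiffOn_tangentMapWithin (m := 1) (by norm_num)
    (chartAt (Euc m) p).open_target.uniqueMDiffOn
  have h3 : ContMDiff (𝓡 m) (𝓡 m).tangent 1
      (fun y : Euc m => (⟨y, v⟩ : TangentBundle (𝓡 m) (Euc m))) :=
    contMDiff_vectorSpace_iff_contDiff.2 contDiff_const
  refine (h2.comp h3.contMDiffOn (s := (chartAt (Euc m) p).target) (fun y hy => hy)).congr ?_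
  intro y hy
  simp only [Function.comp, tangentMapWithin, symmDeriv]
  rw [mfderivWithin_of_isOpen (chartAt (Euc m) p).open_target hy]
  rfl

lemma contDiffOn_chartDeriv {Ω : Set M} {X : ∀ x : M, TangentSpace (𝓡 m) x}
    (hX : ContMDiffOn (𝓡 m) (𝓡 m).tangent 1
      (fun x => (⟨x, X x⟩ : TangentBundle (𝓡 m) M)) Ω) (p : M) :
    ContDiffOn ℝ 1 (fun y => chartDeriv p ((chartAt (Euc m) p).symm y)
        (X ((chartAt (Euc m) p).symm y)))
      ((chartAt (Euc m) p).target ∩ (chartAt (Euc m) p).symm ⁻¹' Ω) := by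
  have h1 : ContMDiffOn (𝓡 m) (𝓡 m) 2 (chartAt (Euc m) p) (chartAt (Euc m) p).source :=
    (contMDiffOn_chart (n := ∞)).of_le (by norm_cast)
  have h2 := h1.contMDiffOn_tangentMapWithin (m := 1) (by norm_num)
    (chartAt (Euc m) p).open_source.uniqueMDiffOn
  have h3 : ContMDiffOn (𝓡 m) (𝓡 m) 1 (chartAt (Euc m) p).symm (chartAt (Euc m) p).target :=
    (contMDiffOn_chart_symm (n := ∞)).of_le (by norm_cast)
  have h4 := hX.comp (h3.mono inter_subset_left)
    (s := (chartAt (Euc m) p).target ∩ (chartAt (Euc m) p).symm ⁻¹' Ω) (fun y hy => hy.2)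
  have h5 := h2.comp h4 (fun y hy => (chartAt (Euc m) p).map_target hy.1)
  refine contMDiffOn_vectorSpace_iff_contDiffOn.1 (h5.congr ?_)
  intro y hy
  simp only [Function.comp, tangentMapWithin, chartDeriv]
  rw [mfderivWithin_of_isOpen (chartAt (Euc m) p).open_source
    ((chartAt (Euc m) p).map_target hy.1), (chartAt (Euc m) p).right_inv hy.1]
  rfl

lemma contDiffOn_coordComp {Ω : Set M} {X : ∀ x : M, TangentSpace (𝓡 m) x}
    (hX : ContMDiffOn (𝓡 m) (𝓡 m).tangent 1
      (fun x => (⟨x, X x⟩ : TangentBundle (𝓡 m) M)) Ω) (p : M) (i : Fin m) :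
    ContDiffOn ℝ 1 (coordComp p X i)
      ((chartAt (Euc m) p).target ∩ (chartAt (Euc m) p).symm ⁻¹' Ω) :=
  contDiffOn_euclidean.1 (contDiffOn_chartDeriv hX p) i

end ChartCalculus

section Metric

variable {m : ℕ} {M : Type*} [TopologicalSpace M] [ChartedSpace (Euc m) M]
  [RiemannianBundle (fun x : M => TangentSpace (𝓡 m) x)]

/-- The Riemannian scalar product at `x`, as a function on `ℝᵐ × ℝᵐ`. -/
def metricForm (x : M) (u v : Euc m) : ℝ :=
  inner ℝ (show TangentSpace (𝓡 m) x from u) (show TangentSpace (𝓡 m) x from v)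

lemma gram_apply (p : M) (y : Euc m) (i j : Fin m) :
    gram p y i j = metricForm ((chartAt (Euc m) p).symm y)
      (symmDeriv p y (EuclideanSpace.single i 1)) (symmDeriv p y (EuclideanSpace.single j 1)) :=
  rfl

lemma metricForm_smul_left (x : M) (a : ℝ) (u v : Euc m) :
    metricForm x (a • u) v = a * metricForm x u v :=
  real_inner_smul_left (F := TangentSpace (𝓡 m) x) _ _ _

lemma metricForm_comm (x : M) (u v : Euc m) : metricForm x u v = metricForm x v u :=
  real_inner_comm (F := TangentSpace (𝓡 m) x) _ _

lemma metricForm_self_pos (x : M) {u : Euc m} (hu : u ≠ 0) : 0 < metricForm x u u :=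
  real_inner_self_pos (F := TangentSpace (𝓡 m) x).2 hu

lemma metricForm_self (x : M) (u : TangentSpace (𝓡 m) x) : metricForm x u u = ‖u‖ ^ 2 :=
  real_inner_self_eq_norm_sq (F := TangentSpace (𝓡 m) x) _

variable [IsManifold (𝓡 m) ∞ M]
  [IsContMDiffRiemannianBundle (𝓡 m) ∞ (Euc m) (fun x : M => TangentSpace (𝓡 m) x)]

lemma contDiffOn_metricForm_symmDeriv (p : M) (u v : Euc m) :
    ContDiffOn ℝ 1 (fun y => metricForm ((chartAt (Euc m) p).symm y)
      (symmDeriv p y u) (symmDeriv p y v)) (chartAt (Euc m) p).target := by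
  rw [← contMDiffOn_iff_contDiffOn]
  have : IsContMDiffRiemannianBundle (𝓡 m) 1 (Euc m) (fun x : M => TangentSpace (𝓡 m) x) :=
    IsContMDiffRiemannianBundle.of_le (n := ∞) (by norm_cast)
  have := ContMDiffOn.inner_bundle (IB := 𝓡 m) (n := 1) (F := Euc m)
    (E := fun x : M => TangentSpace (𝓡 m) x) (contMDiffOn_coordVec p u) (contMDiffOn_coordVec p v)
  exact this

end Metric

section Density

variable {m : ℕ} {M : Type*} [TopologicalSpace M] [ChartedSpace (Euc m) M]
  [RiemannianBundle (fun x : M => TangentSpace (𝓡 m) x)]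

/-- The matrix of a linear endomorphism of `ℝᵐ` in the standard basis. -/
def stdMatrix (L : Euc m →L[ℝ] Euc m) : Matrix (Fin m) (Fin m) ℝ :=
  Matrix.of fun i j => L (EuclideanSpace.single j 1) i

lemma stdMatrix_det (L : Euc m →L[ℝ] Euc m) : (stdMatrix L).det = L.det := by
  rw [ContinuousLinearMap.det, ← LinearMap.det_toMatrix (EuclideanSpace.basisFun (Fin m) ℝ).toBasis]
  congr 1

lemma euc_eq_sum (v : Euc m) : v = ∑ i, v i • (EuclideanSpace.single i (1 : ℝ) : Euc m) := by
  have := (EuclideanSpace.basisFun (Fin m) ℝ).sum_repr v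
  simpa using this.symm

lemma metricForm_sum_left (x : M) {ι : Type*} (s : Finset ι) (f : ι → Euc m) (v : Euc m) :
    metricForm x (∑ i ∈ s, f i) v = ∑ i ∈ s, metricForm x (f i) v := 
  sum_inner (E := TangentSpace (𝓡 m) x) s _ _

lemma metricForm_symmDeriv (p : M) (y u v : Euc m) :
    metricForm ((chartAt (Euc m) p).symm y) (symmDeriv p y u) (symmDeriv p y v) =
      ∑ i, ∑ j, u i * v j * gram p y i j := by
  conv_lhs => rw [euc_eq_sum u, euc_eq_sum v]
  simp only [map_sum, map_smul, metricForm_sum_left, metricForm_smul_left]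
  refine Finset.sum_congr rfl fun i _ => ?_
  rw [metricForm_comm, metricForm_sum_left, Finset.mul_sum]
  refine Finset.sum_congr rfl fun j _ => ?_
  rw [metricForm_smul_left, metricForm_comm, gram_apply]
  ring

variable [IsManifold (𝓡 m) ∞ M]

lemma gram_det_pos {p : M} {y : Euc m} (hy : y ∈ (chartAt (Euc m) p).target) :
    0 < (gram p y).det := by
  refine Matrix.PosDef.det_pos (Matrix.PosDef.of_dotProduct_mulVec_pos ?_ fun v hv => ?_)
  · ext i j
    exact metricForm_comm ((chartAt (Euc m) p).symm y) _ _
  · have hne : symmDeriv p y (WithLp.toLp 2 v) ≠ 0 := by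
      intro h0
      have := chartDeriv_symmDeriv hy (WithLp.toLp 2 v)
      rw [h0, map_zero] at this
      exact hv (by simpa using this.symm)
    have hpos := metricForm_self_pos ((chartAt (Euc m) p).symm y) hne
    rw [metricForm_symmDeriv] at hpos
    refine hpos.trans_eq ?_
    simp only [dotProduct, Matrix.mulVec, Finset.mul_sum, star_trivial]
    exact Finset.sum_congr rfl fun i _ => Finset.sum_congr rfl fun j _ => by ring

lemma volDensity_pos {p : M} {y : Euc m} (hy : y ∈ (chartAt (Euc m) p).target) :
    0 < volDensity p y := Real.sqrt_pos.2 (gram_det_pos hy)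

lemma gram_transition {p q : M} {y : Euc m} (hy : y ∈ (chartAt (Euc m) p).target)
    (hq : (chartAt (Euc m) p).symm y ∈ (chartAt (Euc m) q).source) :
    gram p y = (stdMatrix (fderiv ℝ (transition m p q) y)).transpose *
      gram q (transition m p q y) * stdMatrix (fderiv ℝ (transition m p q) y) := by
  ext i j
  rw [gram_apply, symmDeriv_eq_transition hy hq, symmDeriv_eq_transition hy hq]
  have hx : (chartAt (Euc m) p).symm y = (chartAt (Euc m) q).symm (transition m p q y) :=
    ((chartAt (Euc m) q).left_inv hq).symm
  rw [hx, metricForm_symmDeriv]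
  simp only [Matrix.mul_apply, Matrix.transpose_apply, stdMatrix, Matrix.of_apply]
  rw [Finset.sum_comm]
  refine Finset.sum_congr rfl fun k _ => ?_
  rw [Finset.sum_mul]
  refine Finset.sum_congr rfl fun l _ => ?_
  ring

lemma volDensity_transition {p q : M} {y : Euc m} (hy : y ∈ (chartAt (Euc m) p).target)
    (hq : (chartAt (Euc m) p).symm y ∈ (chartAt (Euc m) q).source) :
    volDensity p y =
      |(fderiv ℝ (transition m p q) y).det| * volDensity q (transition m p q y) := by
  rw [volDensity, gram_transition hy hq, Matrix.det_mul, Matrix.det_mul, Matrix.det_transpose,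
    stdMatrix_det, mul_right_comm, ← pow_two, Real.sqrt_mul (sq_nonneg _), Real.sqrt_sq_eq_abs,
    volDensity]

variable [IsContMDiffRiemannianBundle (𝓡 m) ∞ (Euc m) (fun x : M => TangentSpace (𝓡 m) x)]

lemma contDiffOn_gram (p : M) (i j : Fin m) :
    ContDiffOn ℝ 1 (fun y => gram p y i j) (chartAt (Euc m) p).target :=
  contDiffOn_metricForm_symmDeriv p _ _

lemma contDiffOn_volDensity (p : M) :
    ContDiffOn ℝ 1 (volDensity p) (chartAt (Euc m) p).target := by
  have : ContDiffOn ℝ 1 (fun y => (gram p y).det) (chartAt (Euc m) p).target := by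
    simp only [Matrix.det_apply]
    refine ContDiffOn.sum fun σ _ => ContDiffOn.const_smul _ ?_
    exact contDiffOn_prod fun i _ => contDiffOn_gram p _ _
  exact this.sqrt fun y hy => (gram_det_pos hy).ne'

end Density

section Volume

variable {m : ℕ} {M : Type*} [TopologicalSpace M] [ChartedSpace (Euc m) M]

lemma measurableEmbedding_chart_symm [MeasurableSpace M] [BorelSpace M] (p : M) :
    MeasurableEmbedding ((chartAt (Euc m) p).target.domRestrict (chartAt (Euc m) p).symm) :=
  (chartAt (Euc m) p).symm.isOpenEmbedding_restrict.measurableEmbedding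

variable [RiemannianBundle (fun x : M => TangentSpace (𝓡 m) x)]

variable (m) in
/-- The measure `√(det gᵢⱼ) dy` on the range of the chart around `p`. -/
def coordVol (p : M) : Measure (Euc m) :=
  (volume.restrict (chartAt (Euc m) p).target).withDensity
    (fun y => ENNReal.ofReal (volDensity p y))

lemma coordVol_restrict (p : M) :
    (coordVol m p).restrict (chartAt (Euc m) p).target = coordVol m p := by
  rw [coordVol, restrict_withDensity (chartAt (Euc m) p).open_target.measurableSet,
    Measure.restrict_restrict (chartAt (Euc m) p).open_target.measurableSet, inter_self]

lemma aemeasurable_volDensity [IsManifold (𝓡 m) ∞ M]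
    [IsContMDiffRiemannianBundle (𝓡 m) ∞ (Euc m) (fun x : M => TangentSpace (𝓡 m) x)] (p : M) :
    AEMeasurable (fun y => ENNReal.ofReal (volDensity p y))
    (volume.restrict (chartAt (Euc m) p).target) :=
  ((contDiffOn_volDensity p).continuousOn.aemeasurable
    (chartAt (Euc m) p).open_target.measurableSet).ennreal_ofReal

variable [MeasurableSpace M] [BorelSpace M]

lemma chartVol_eq_map (p : M) :
    chartVol m p = ((coordVol m p).comap ((↑) : (chartAt (Euc m) p).target → Euc m)).map
      ((chartAt (Euc m) p).target.domRestrict (chartAt (Euc m) p).symm) := by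
  have h1 : (chartAt (Euc m) p).target.domRestrict (chartAt (Euc m) p).symm =
      (chartAt (Euc m) p).symm ∘ ((↑) : (chartAt (Euc m) p).target → Euc m) := rfl
  have h2 : ((coordVol m p).comap ((↑) : (chartAt (Euc m) p).target → Euc m)).map
      ((↑) : (chartAt (Euc m) p).target → Euc m) = coordVol m p := by
    rw [map_comap_subtype_coe (chartAt (Euc m) p).open_target.measurableSet, coordVol_restrict]
  have h3 : AEMeasurable (chartAt (Euc m) p).symm (coordVol m p) := by
    rw [← coordVol_restrict]
    exact (chartAt (Euc m) p).symm.continuousOn.aemeasurable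
      (chartAt (Euc m) p).open_target.measurableSet
  rw [h1, ← AEMeasurable.map_map_of_aemeasurable (by rwa [h2]) measurable_subtype_coe.aemeasurable,
    h2]
  rfl

lemma chartVol_apply (p : M) (s : Set M) :
    chartVol m p s =
      coordVol m p ((chartAt (Euc m) p).target ∩ (chartAt (Euc m) p).symm ⁻¹' s) := by
  rw [chartVol_eq_map, (measurableEmbedding_chart_symm p).map_apply,
    (MeasurableEmbedding.subtype_coe (chartAt (Euc m) p).open_target.measurableSet).comap_apply]
  congr 1
  ext y
  simp [and_comm]

lemma ae_chartVol_iff (p : M) {P : M → Prop} :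
    (∀ᵐ x ∂(chartVol m p), P x) ↔ ∀ᵐ y ∂(coordVol m p), P ((chartAt (Euc m) p).symm y) := by
  have hm := (chartAt (Euc m) p).open_target.measurableSet
  rw [chartVol_eq_map, (measurableEmbedding_chart_symm p).ae_map_iff]
  conv_rhs => rw [← coordVol_restrict, ← map_comap_subtype_coe hm,
    (MeasurableEmbedding.subtype_coe hm).ae_map_iff]
  rfl

lemma integral_chartVol_coordVol (p : M) (F : M → ℝ) :
    ∫ x, F x ∂(chartVol m p) = ∫ y, F ((chartAt (Euc m) p).symm y) ∂(coordVol m p) := by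
  have hm := (chartAt (Euc m) p).open_target.measurableSet
  rw [chartVol_eq_map, (measurableEmbedding_chart_symm p).integral_map]
  conv_rhs => rw [← coordVol_restrict, ← map_comap_subtype_coe hm,
    (MeasurableEmbedding.subtype_coe hm).integral_map]
  rfl

lemma integrable_chartVol_iff_coordVol (p : M) (F : M → ℝ) :
    Integrable F (chartVol m p) ↔
      Integrable (fun y => F ((chartAt (Euc m) p).symm y)) (coordVol m p) := by
  have hm := (chartAt (Euc m) p).open_target.measurableSet
  rw [chartVol_eq_map, (measurableEmbedding_chart_symm p).integrable_map_iff]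
  conv_rhs => rw [← coordVol_restrict, ← map_comap_subtype_coe hm,
    (MeasurableEmbedding.subtype_coe hm).integrable_map_iff]
  rfl

lemma ae_chartVol_of_ae {p : M} {P : M → Prop}
    (h : ∀ᵐ y ∂(volume.restrict (chartAt (Euc m) p).target), P ((chartAt (Euc m) p).symm y)) :
    ∀ᵐ x ∂(chartVol m p), P x :=
  (ae_chartVol_iff p).2 ((withDensity_absolutelyContinuous _ _).ae_le h)

lemma chartVol_inter_source (p : M) (s : Set M) :
    chartVol m p (s ∩ (chartAt (Euc m) p).source) = chartVol m p s := by
  rw [chartVol_apply, chartVol_apply]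
  congr 1
  ext y
  simp only [mem_inter_iff, mem_preimage]
  exact ⟨fun h => ⟨h.1, h.2.1⟩, fun h => ⟨h.1, h.2, (chartAt (Euc m) p).map_target h.1⟩⟩

variable [IsManifold (𝓡 m) ∞ M]
  [IsContMDiffRiemannianBundle (𝓡 m) ∞ (Euc m) (fun x : M => TangentSpace (𝓡 m) x)]

lemma integral_chartVol (p : M) (F : M → ℝ) :
    ∫ x, F x ∂(chartVol m p) = ∫ y in (chartAt (Euc m) p).target,
      volDensity p y * F ((chartAt (Euc m) p).symm y) := by
  rw [integral_chartVol_coordVol, coordVol,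
    integral_withDensity_eq_integral_toReal_smul₀ (aemeasurable_volDensity p)
      (.of_forall fun _ => ENNReal.ofReal_lt_top)]
  simp [volDensity, Real.sqrt_nonneg]

lemma integrable_chartVol_iff (p : M) (F : M → ℝ) :
    Integrable F (chartVol m p) ↔ IntegrableOn (fun y =>
      volDensity p y * F ((chartAt (Euc m) p).symm y)) (chartAt (Euc m) p).target := by
  rw [integrable_chartVol_iff_coordVol, coordVol,
    integrable_withDensity_iff_integrable_smul₀' (aemeasurable_volDensity p)
      (.of_forall fun _ => ENNReal.ofReal_lt_top)]
  simp [volDensity, Real.sqrt_nonneg, IntegrableOn]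

lemma chartVol_overlap {p q : M} {s : Set M} (hs : MeasurableSet s)
    (hp : s ⊆ (chartAt (Euc m) p).source) (hq : s ⊆ (chartAt (Euc m) q).source) :
    chartVol m p s = chartVol m q s := by
  have hmeas : ∀ p : M, MeasurableSet
      ((chartAt (Euc m) p).target ∩ (chartAt (Euc m) p).symm ⁻¹' s) := fun p => by
    have := ((measurableEmbedding_chart_symm (m := m) p).measurable hs)
    replace := MeasurableSet.subtype_image (chartAt (Euc m) p).open_target.measurableSet this
    convert this using 1
    ext y
    simp [and_comm]
  have himg : transition m p q '' ((chartAt (Euc m) p).target ∩ (chartAt (Euc m) p).symm ⁻¹' s) =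
      (chartAt (Euc m) q).target ∩ (chartAt (Euc m) q).symm ⁻¹' s := by
    ext z
    constructor
    · rintro ⟨y, ⟨hy, hys⟩, rfl⟩
      refine ⟨(chartAt (Euc m) q).map_source (hq hys), ?_⟩
      simp only [mem_preimage, transition]
      rwa [(chartAt (Euc m) q).left_inv (hq hys)]
    · rintro ⟨hz, hzs⟩
      refine ⟨chartAt (Euc m) p ((chartAt (Euc m) q).symm z),
        ⟨(chartAt (Euc m) p).map_source (hp hzs), ?_⟩, ?_⟩
      · simp only [mem_preimage]
        rwa [(chartAt (Euc m) p).left_inv (hp hzs)]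
      · simp only [transition]
        rw [(chartAt (Euc m) p).left_inv (hp hzs), (chartAt (Euc m) q).right_inv hz]
  have hinj : InjOn (transition m p q)
      ((chartAt (Euc m) p).target ∩ (chartAt (Euc m) p).symm ⁻¹' s) := by
    intro y hy z hz hyz
    have := (chartAt (Euc m) q).injOn (hq hy.2) (hq hz.2) hyz
    exact (chartAt (Euc m) p).symm.injOn hy.1 hz.1 this
  have happ : ∀ p : M, chartVol m p s =
      ∫⁻ y in (chartAt (Euc m) p).target ∩ (chartAt (Euc m) p).symm ⁻¹' s,
        ENNReal.ofReal (volDensity p y) := fun p => by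
    rw [chartVol_apply, coordVol, withDensity_apply _ (hmeas p),
      Measure.restrict_restrict (hmeas p), inter_right_comm, inter_self]
  rw [happ p, happ q, ← himg, lintegral_image_eq_lintegral_abs_det_fderiv_mul volume (hmeas p)
    (fun y hy => ((hasFDerivAt_transition hy.1 (hq hy.2)).differentiableAt.hasFDerivAt
      |>.hasFDerivWithinAt)) hinj]
  refine setLIntegral_congr_fun (hmeas p) fun y hy => ?_
  rw [volDensity_transition hy.1 (hq hy.2), ENNReal.ofReal_mul (abs_nonneg _)]

lemma rvol_restrict_source (p : M) :
    (rvol m M).restrict (chartAt (Euc m) p).source = chartVol m p := by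
  have hms := (chartAt (Euc m) p).open_source.measurableSet
  have hle : rvol m M ≤ chartVol m p + (⊤ : Measure M).restrict (chartAt (Euc m) p).sourceᶜ := by
    refine iSup_le fun q => Measure.le_iff.2 fun s hs => ?_
    rw [← measure_inter_add_sdiff s hms, Measure.add_apply, Measure.restrict_apply hs]
    refine add_le_add ?_ ?_
    · calc chartVol m q (s ∩ (chartAt (Euc m) p).source)
          = chartVol m q (s ∩ (chartAt (Euc m) p).source ∩ (chartAt (Euc m) q).source) :=
            (chartVol_inter_source q _).symm
        _ = chartVol m p (s ∩ (chartAt (Euc m) p).source ∩ (chartAt (Euc m) q).source) :=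
            (chartVol_overlap ((hs.inter hms).inter (chartAt (Euc m) q).open_source.measurableSet)
              (fun x hx => hx.1.2) (fun x hx => hx.2)).symm
        _ ≤ chartVol m p s := measure_mono fun x hx => hx.1.1
    · exact (le_top : chartVol m q ≤ ⊤) _
  refine le_antisymm (Measure.le_iff.2 fun s hs => ?_) (Measure.le_iff.2 fun s hs => ?_)
  · rw [Measure.restrict_apply hs]
    refine (hle _).trans ?_
    rw [Measure.add_apply, Measure.restrict_apply (hs.inter hms)]
    have : s ∩ (chartAt (Euc m) p).source ∩ (chartAt (Euc m) p).sourceᶜ = ∅ := by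
      ext x; simp
    rw [this, measure_empty, add_zero]
    exact measure_mono inter_subset_left
  · rw [Measure.restrict_apply hs, ← chartVol_inter_source]
    exact le_iSup (fun p => chartVol m p) p _

end Volume

section Derivative

variable {m : ℕ} {M : Type*} [TopologicalSpace M] [ChartedSpace (Euc m) M]
  [IsManifold (𝓡 m) ∞ M] {f : M → ℝ} {p x : M}

/-- The differential of `f` at `x`, as a linear form on `ℝᵐ`. -/
def differential (f : M → ℝ) (x : M) : Euc m →L[ℝ] ℝ := mfderiv (𝓡 m) 𝓘(ℝ, ℝ) f x

lemma hasFDerivAt_comp_chart_symm (hx : x ∈ (chartAt (Euc m) p).source)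
    (hf : MDifferentiableAt (𝓡 m) 𝓘(ℝ, ℝ) f x) :
    HasFDerivAt (fun y => f ((chartAt (Euc m) p).symm y))
      ((differential f x).comp
        (symmDeriv p (chartAt (Euc m) p x))) (chartAt (Euc m) p x) := by
  have h1 := ((mdifferentiable_chart (I := 𝓡 m) p).mdifferentiableAt_symm
    ((chartAt (Euc m) p).map_source hx)).hasMFDerivAt
  have h2 : HasMFDerivAt (𝓡 m) 𝓘(ℝ, ℝ) f ((chartAt (Euc m) p).symm (chartAt (Euc m) p x))
      (differential f x) := by
    rw [(chartAt (Euc m) p).left_inv hx]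
    exact hf.hasMFDerivAt
  exact (h2.comp (chartAt (Euc m) p x) h1).hasFDerivAt

lemma mdifferentiableAt_of_comp_chart_symm (hx : x ∈ (chartAt (Euc m) p).source)
    (hf : DifferentiableAt ℝ (fun y => f ((chartAt (Euc m) p).symm y)) (chartAt (Euc m) p x)) :
    MDifferentiableAt (𝓡 m) 𝓘(ℝ, ℝ) f x := by
  have h1 := (mdifferentiable_chart (I := 𝓡 m) p).mdifferentiableAt hx
  have h2 := MDifferentiableAt.comp x hf.mdifferentiableAt h1
  refine h2.congr_of_eventuallyEq ?_
  filter_upwards [(chartAt (Euc m) p).open_source.mem_nhds hx] with z hz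
  simp [(chartAt (Euc m) p).left_inv hz]

end Derivative

section Length

lemma norm_le_of_metricForm_le {m : ℕ} {M : Type*} [TopologicalSpace M] [ChartedSpace (Euc m) M]
    [RiemannianBundle (fun x : M => TangentSpace (𝓡 m) x)] {x : M} {u : TangentSpace (𝓡 m) x}
    {c : ℝ} (hc : 0 ≤ c) (h : metricForm x u u ≤ c ^ 2) : ‖u‖ ≤ c := by
  rw [metricForm_self] at h
  exact le_of_sq_le_sq h hc

lemma enorm_le_of_metricForm_le {m : ℕ} {M : Type*} [TopologicalSpace M] [ChartedSpace (Euc m) M]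
    [RiemannianBundle (fun x : M => TangentSpace (𝓡 m) x)] {x : M} {u : TangentSpace (𝓡 m) x}
    {c : ℝ} (hc : 0 ≤ c) (h : metricForm x u u ≤ c ^ 2) : ‖u‖ₑ ≤ ENNReal.ofReal c := by
  rw [← ofReal_norm]
  exact ENNReal.ofReal_le_ofReal (norm_le_of_metricForm_le hc h)

variable {m : ℕ} {M : Type*} [MetricSpace M] [ChartedSpace (Euc m) M]
  [RiemannianBundle (fun x : M => TangentSpace (𝓡 m) x)]
  [IsRiemannianManifold (𝓡 m) M]

lemma dist_chart_symm_le [IsManifold (𝓡 m) ∞ M] {p : M} {y v : Euc m} {c : ℝ} (hc : 0 ≤ c)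
    (hseg : ∀ t ∈ Icc (0 : ℝ) 1, y + t • v ∈ (chartAt (Euc m) p).target)
    (hle : ∀ t ∈ Icc (0 : ℝ) 1, metricForm ((chartAt (Euc m) p).symm (y + t • v))
      (symmDeriv p (y + t • v) v) (symmDeriv p (y + t • v) v) ≤ c ^ 2) :
    dist ((chartAt (Euc m) p).symm y) ((chartAt (Euc m) p).symm (y + v)) ≤ c := by
  let γ : ℝ → M := fun t => (chartAt (Euc m) p).symm (y + t • v)
  have hη : ContMDiff 𝓘(ℝ, ℝ) (𝓡 m) 1 (fun t : ℝ => y + t • v) :=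
    ContDiff.contMDiff (by fun_prop)
  have h3 : ContMDiffOn (𝓡 m) (𝓡 m) 1 (chartAt (Euc m) p).symm (chartAt (Euc m) p).target :=
    (contMDiffOn_chart_symm (n := ∞)).of_le (by norm_cast)
  have hγ : ContMDiffOn 𝓘(ℝ, ℝ) (𝓡 m) 1 γ (Icc 0 1) := h3.comp hη.contMDiffOn hseg
  have h1 : edist ((chartAt (Euc m) p).symm y) ((chartAt (Euc m) p).symm (y + v)) ≤
      Manifold.pathELength (𝓡 m) γ 0 1 := by
    rw [IsRiemannianManifold.out (I := 𝓡 m)]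
    exact Manifold.riemannianEDist_le_pathELength hγ (by simp [γ]) (by simp [γ]) zero_le_one
  have h2 : Manifold.pathELength (𝓡 m) γ 0 1 ≤ ENNReal.ofReal c := by
    rw [Manifold.pathELength_eq_lintegral_mfderiv_Icc]
    calc _ ≤ ∫⁻ t in Icc (0 : ℝ) 1, ENNReal.ofReal c := by
          refine setLIntegral_mono' measurableSet_Icc fun t ht => ?_
          have hd : HasMFDerivAt 𝓘(ℝ, ℝ) (𝓡 m) (fun t : ℝ => y + t • v) t
              ((1 : ℝ →L[ℝ] ℝ).smulRight v) := by
            have : HasDerivAt (fun t : ℝ => y + t • v) v t := by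
              simpa using ((hasDerivAt_id t).smul_const v).const_add y
            exact this.hasFDerivAt.hasMFDerivAt
          have he := ((mdifferentiable_chart (I := 𝓡 m) p).mdifferentiableAt_symm
            (hseg t ht)).hasMFDerivAt
          have hcomp := (he.comp t hd).mfderiv
          have : mfderiv 𝓘(ℝ, ℝ) (𝓡 m) γ t 1 = symmDeriv p (y + t • v) v := by
            have h5 := congrArg (fun L => L (1 : ℝ)) hcomp
            refine Eq.trans h5 ?_
            change symmDeriv p (y + t • v) ((1 : ℝ) • v) = _
            rw [one_smul]
          rw [this]
          exact enorm_le_of_metricForm_le hc (hle t ht)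
      _ = ENNReal.ofReal c := by simp
  have h4 := h1.trans h2
  rw [edist_dist] at h4
  exact (ENNReal.ofReal_le_ofReal_iff hc).1 h4

lemma exists_dist_le_dist_lt (m : ℕ) {M : Type*} [MetricSpace M] [ChartedSpace (Euc m) M]
    [RiemannianBundle (fun x : M => TangentSpace (𝓡 m) x)] [IsRiemannianManifold (𝓡 m) M]
    {o x : M} {r δ : ℝ} (hr : 0 ≤ r) (hδ : 0 < δ)
    (h : dist o x < r + δ) : ∃ z, dist o z ≤ r ∧ dist z x < δ := by
  by_cases hx : dist o x ≤ r
  · exact ⟨x, hx, by simpa using hδ⟩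
  push Not at hx
  have h1 : Manifold.riemannianEDist (𝓡 m) o x < ENNReal.ofReal (r + δ) := by
    rw [← IsRiemannianManifold.out (I := 𝓡 m), edist_dist]
    exact (ENNReal.ofReal_lt_ofReal_iff (by linarith)).2 h
  obtain ⟨γ, h0, h1, hγ, hlen⟩ := Manifold.exists_lt_of_riemannianEDist_lt h1
  have hcont : ContinuousOn (fun t => dist o (γ t)) (Icc 0 1) :=
    (continuous_const.dist continuous_id).comp_continuousOn hγ.continuousOn
  obtain ⟨t, ht, htr⟩ : r ∈ (fun t => dist o (γ t)) '' Icc 0 1 := by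
    refine intermediate_value_Icc zero_le_one hcont ⟨?_, ?_⟩
    · simpa [h0] using hr
    · simpa [h1] using hx.le
  refine ⟨γ t, htr.le, ?_⟩
  have ha : edist o (γ t) ≤ Manifold.pathELength (𝓡 m) γ 0 t := by
    rw [IsRiemannianManifold.out (I := 𝓡 m)]
    exact Manifold.riemannianEDist_le_pathELength (hγ.mono (Icc_subset_Icc_right ht.2)) h0 rfl ht.1
  have hb : edist (γ t) x ≤ Manifold.pathELength (𝓡 m) γ t 1 := by
    rw [IsRiemannianManifold.out (I := 𝓡 m)]
    exact Manifold.riemannianEDist_le_pathELength (hγ.mono (Icc_subset_Icc_left ht.1)) rfl h1 ht.2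
  have hsum := (add_le_add ha hb).trans_lt ((Manifold.pathELength_add ht.1 ht.2).trans_lt hlen)
  simp only at htr
  rw [edist_dist, edist_dist, htr, ← ENNReal.ofReal_add hr dist_nonneg,
    ENNReal.ofReal_lt_ofReal_iff (by linarith)] at hsum
  linarith

/-- **Hopf-Rinow**: closed balls of a complete Riemannian manifold are compact. -/
theorem isCompact_closedBall_of_complete (m : ℕ) {M : Type*} [MetricSpace M]
    [ChartedSpace (Euc m) M] [RiemannianBundle (fun x : M => TangentSpace (𝓡 m) x)]
    [IsRiemannianManifold (𝓡 m) M] [CompleteSpace M] (o : M) (r : ℝ) :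
    IsCompact (closedBall o r) := by
  have : LocallyCompactSpace M := ChartedSpace.locallyCompactSpace (Euc m) M
  by_contra hr
  let S : Set ℝ := {r | ¬ IsCompact (closedBall o r)}
  have hS : ∀ s ∈ S, 0 ≤ s := fun s hs => by
    by_contra hneg
    exact hs (by rw [closedBall_eq_empty.2 (not_le.1 hneg)]; exact isCompact_empty)
  have hSb : BddBelow S := ⟨0, hS⟩
  have hSne : S.Nonempty := ⟨r, hr⟩
  have hR0 : 0 ≤ sInf S := le_csInf hSne hS
  have hlt : ∀ s < sInf S, IsCompact (closedBall o s) := fun s hs => by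
    by_contra hns
    exact absurd (csInf_le hSb hns) (not_le.2 hs)
  have hR : IsCompact (closedBall o (sInf S)) := by
    rcases hR0.eq_or_lt with h0 | hpos
    · rw [← h0, closedBall_zero]
      exact isCompact_singleton
    refine TotallyBounded.isCompact_of_isClosed ?_ isClosed_closedBall
    refine Metric.totallyBounded_iff.2 fun ε hε => ?_
    have hs : max 0 (sInf S - ε / 4) < sInf S := max_lt hpos (by linarith)
    obtain ⟨t, -, htf, ht⟩ := (hlt _ hs).finite_cover_balls (half_pos hε)
    refine ⟨t, htf, fun x hx => ?_⟩
    have hx' : dist o x < max 0 (sInf S - ε / 4) + ε / 2 := by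
      rw [mem_closedBall, dist_comm] at hx
      linarith [le_max_right 0 (sInf S - ε / 4)]
    obtain ⟨z, hz, hzx⟩ := exists_dist_le_dist_lt m (le_max_left _ _) (half_pos hε) hx'
    obtain ⟨y, hy, hzy⟩ := mem_iUnion₂.1 (ht (show z ∈ closedBall o _ by
      rwa [mem_closedBall, dist_comm]))
    refine mem_iUnion₂.2 ⟨y, hy, ?_⟩
    rw [mem_ball] at hzy ⊢
    linarith [dist_triangle x z y, dist_comm x z]
  obtain ⟨δ, hδ, hδc⟩ := hR.exists_isCompact_cthickening
  have hbig : IsCompact (closedBall o (sInf S + δ / 2)) := by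
    refine hδc.of_isClosed_subset isClosed_closedBall fun x hx => ?_
    rw [mem_closedBall, dist_comm] at hx
    obtain ⟨z, hz, hzx⟩ := exists_dist_le_dist_lt m hR0 hδ (show dist o x < sInf S + δ by linarith)
    refine thickening_subset_cthickening _ _ (mem_thickening_iff.2 ⟨z, ?_, ?_⟩)
    · rwa [mem_closedBall, dist_comm]
    · rwa [dist_comm]
  obtain ⟨s, hsS, hs⟩ := exists_lt_of_csInf_lt hSne (show sInf S < sInf S + δ / 2 by linarith)
  exact hsS (hbig.of_isClosed_subset isClosed_closedBall (closedBall_subset_closedBall hs.le))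

section

variable [IsManifold (𝓡 m) ∞ M]
  [IsContMDiffRiemannianBundle (𝓡 m) ∞ (Euc m) (fun x : M => TangentSpace (𝓡 m) x)]

lemma locallyLipschitzOn_chart_symm (p : M) :
    LocallyLipschitzOn (chartAt (Euc m) p).target (chartAt (Euc m) p).symm := by
  intro y hy
  let S : Euc m → ℝ := fun z => ∑ i, ∑ j, |gram p z i j|
  have hS : ContinuousOn S (chartAt (Euc m) p).target :=
    continuousOn_finsetSum _ fun i _ => continuousOn_finsetSum _ fun j _ =>
      (contDiffOn_gram p i j).continuousOn.abs
  have hS0 : ∀ z, 0 ≤ S z := fun z =>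
    Finset.sum_nonneg fun i _ => Finset.sum_nonneg fun j _ => abs_nonneg _
  have hev : ∀ᶠ z in 𝓝 y, z ∈ (chartAt (Euc m) p).target ∧ S z < S y + 1 := by
    have h1 := (chartAt (Euc m) p).open_target.mem_nhds hy
    exact (eventually_mem_set.2 h1).and ((hS.continuousAt h1).eventually_lt_const (by linarith))
  obtain ⟨ε, hε, hball⟩ := Metric.eventually_nhds_iff_ball.1 hev
  refine ⟨Real.toNNReal √(S y + 1), ball y ε, mem_nhdsWithin_of_mem_nhds (ball_mem_nhds y hε), ?_⟩
  refine LipschitzOnWith.of_dist_le_mul fun a ha b hb => ?_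
  rw [Real.coe_toNNReal _ (Real.sqrt_nonneg _)]
  have hseg : ∀ t ∈ Icc (0 : ℝ) 1, a + t • (b - a) ∈ ball y ε := fun t ht =>
    (convex_ball y ε).add_smul_sub_mem ha hb ht
  have key := dist_chart_symm_le (p := p) (y := a) (v := b - a) (c := √(S y + 1) * dist a b)
    (by positivity) (fun t ht => (hball _ (hseg t ht)).1) fun t ht => by
      rw [metricForm_symmDeriv, mul_pow, Real.sq_sqrt (by linarith [hS0 y])]
      have hz := (hball _ (hseg t ht)).2
      set z := a + t • (b - a)
      have hcoord : ∀ i, |(b - a) i| ≤ dist a b := fun i => by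
        rw [dist_eq_norm, norm_sub_rev]
        exact PiLp.norm_apply_le (b - a) i
      calc ∑ i, ∑ j, (b - a) i * (b - a) j * gram p z i j
          ≤ ∑ i, ∑ j, dist a b ^ 2 * |gram p z i j| := by
            refine Finset.sum_le_sum fun i _ => Finset.sum_le_sum fun j _ => ?_
            refine (le_abs_self _).trans ?_
            rw [abs_mul, abs_mul, pow_two]
            gcongr
            · exact hcoord i
            · exact hcoord j
        _ = S z * dist a b ^ 2 := by
            simp only [S, ← Finset.mul_sum]; ring
        _ ≤ (S y + 1) * dist a b ^ 2 := by gcongr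
  simpa using key

lemma abs_mfderiv_le_of_lipschitz {φ : M → ℝ} {L : ℝ} (hL : 0 ≤ L)
    (hφ : ∀ x y, |φ x - φ y| ≤ L * dist x y) {x : M}
    (hd : MDifferentiableAt (𝓡 m) 𝓘(ℝ, ℝ) φ x) (v : TangentSpace (𝓡 m) x) :
    |differential φ x v| ≤ L * ‖v‖ := by
  have hx := mem_chart_source (Euc m) x
  set y := chartAt (Euc m) x x with hy
  have hyt : y ∈ (chartAt (Euc m) x).target := (chartAt (Euc m) x).map_source hx
  set u : Euc m := chartDeriv x x v with hu
  have huv : symmDeriv x y u = v := symmDeriv_chartDeriv hx v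
  have hder := (hasFDerivAt_comp_chart_symm hx hd)
  have hline : HasDerivAt (fun t : ℝ => φ ((chartAt (Euc m) x).symm (y + t • u)))
      (differential φ x v) 0 := by
    have h1 : HasDerivAt (fun t : ℝ => y + t • u) u 0 := by
      simpa using ((hasDerivAt_id (0 : ℝ)).smul_const u).const_add y
    have h2 := HasFDerivAt.comp_hasDerivAt_of_eq (0 : ℝ) hder h1 (by simp [hy])
    rw [← huv]
    exact h2
  have hc : ∀ c, ‖v‖ < c → |differential φ x v| ≤ L * c := fun c hc => by
    have hc0 : 0 ≤ c := (norm_nonneg v).trans hc.le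
    refine HasDerivAt.le_of_lip' hline (by positivity) ?_
    have hev : ∀ᶠ z in 𝓝 y, z ∈ (chartAt (Euc m) x).target ∧
        metricForm ((chartAt (Euc m) x).symm z) (symmDeriv x z u) (symmDeriv x z u) < c ^ 2 := by
      have h1 := (chartAt (Euc m) x).open_target.mem_nhds hyt
      refine (eventually_mem_set.2 h1).and (((contDiffOn_metricForm_symmDeriv x u u).continuousOn
        |>.continuousAt h1).eventually_lt_const ?_)
      simp only [huv]
      rw [hy, (chartAt (Euc m) x).left_inv hx, metricForm_self]
      exact pow_lt_pow_left₀ hc (norm_nonneg v) two_ne_zero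
    obtain ⟨ε, hε, hball⟩ := Metric.eventually_nhds_iff_ball.1 hev
    have hcont : Tendsto (fun t : ℝ => y + t • u) (𝓝 0) (𝓝 y) := by
      have : Continuous fun t : ℝ => y + t • u := by fun_prop
      simpa using this.tendsto 0
    filter_upwards [hcont (ball_mem_nhds y hε)] with t ht
    have hseg : ∀ s ∈ Icc (0 : ℝ) 1, y + s • t • u ∈ ball y ε := fun s hs => by
      have := (convex_ball y ε).add_smul_sub_mem (mem_ball_self hε) ht hs
      simpa using this
    have key := dist_chart_symm_le (p := x) (y := y) (v := t • u) (c := |t| * c) (by positivity)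
      (fun s hs => (hball _ (hseg s hs)).1) fun s hs => by
        have := (hball _ (hseg s hs)).2
        rw [map_smul, metricForm_smul_left, metricForm_comm, metricForm_smul_left, ← mul_assoc,
          mul_pow, sq_abs, ← pow_two]
        gcongr
    rw [dist_comm] at key
    simp only [zero_smul, add_zero, sub_zero, Real.norm_eq_abs]
    calc _ ≤ L * (|t| * c) := (hφ _ _).trans (by gcongr)
      _ = L * c * |t| := by ring
  refine le_of_forall_pos_le_add fun ε hε => ?_
  refine (hc (‖v‖ + ε / (L + 1)) (lt_add_of_pos_right _ (by positivity))).trans ?_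
  have : L * (ε / (L + 1)) ≤ ε := by
    rw [← mul_div_assoc, div_le_iff₀ (by positivity)]
    nlinarith
  linarith

end

end Length

section LocallyLipschitz

variable {E : Type*} [NormedAddCommGroup E] [NormedSpace ℝ E]

lemma locallyLipschitzOn_mul {α : Type*} [PseudoMetricSpace α] {f g : α → ℝ} {s : Set α}
    (hf : LocallyLipschitzOn s f) (hg : LocallyLipschitzOn s g) :
    LocallyLipschitzOn s (fun x => f x * g x) := by
  intro x hx
  obtain ⟨K, t, ht, hK⟩ := hf hx
  obtain ⟨L, u, hu, hL⟩ := hg hx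
  have hfb : ∀ᶠ z in 𝓝[s] x, |f z| < |f x| + 1 :=
    (hf.continuousOn x hx).abs.eventually_lt_const (by linarith)
  have hgb : ∀ᶠ z in 𝓝[s] x, |g z| < |g x| + 1 :=
    (hg.continuousOn x hx).abs.eventually_lt_const (by linarith)
  refine ⟨Real.toNNReal ((|f x| + 1) * L + (|g x| + 1) * K), _,
    inter_mem (inter_mem ht hu) (inter_mem hfb hgb),
    LipschitzOnWith.of_dist_le_mul fun a ha b hb => ?_⟩
  rw [Real.coe_toNNReal _ (by positivity)]
  have h1 := hK.dist_le_mul a ha.1.1 b hb.1.1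
  have h2 := hL.dist_le_mul a ha.1.2 b hb.1.2
  have h3 : |f a| ≤ |f x| + 1 := le_of_lt ha.2.1
  have h4 : |g b| ≤ |g x| + 1 := le_of_lt hb.2.2
  rw [Real.dist_eq] at h1 h2 ⊢
  calc |f a * g a - f b * g b| = |f a * (g a - g b) + g b * (f a - f b)| := by ring_nf
    _ ≤ |f a| * |g a - g b| + |g b| * |f a - f b| := by
        rw [← abs_mul, ← abs_mul]; exact abs_add_le _ _
    _ ≤ (|f x| + 1) * (L * dist a b) + (|g x| + 1) * (K * dist a b) := by gcongr
    _ = _ := by ring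

lemma locallyLipschitzOn_of_contDiffOn {f : E → ℝ} {U : Set E} (hU : IsOpen U)
    (hf : ContDiffOn ℝ 1 f U) : LocallyLipschitzOn U f := by
  intro x hx
  obtain ⟨K, t, ht, hK⟩ := (hf.contDiffAt (hU.mem_nhds hx)).exists_lipschitzOnWith
  exact ⟨K, t, mem_nhdsWithin_of_mem_nhds ht, hK⟩

lemma locallyLipschitz_of_tsupport_subset {α : Type*} [PseudoMetricSpace α] {f : α → ℝ}
    {U : Set α} (hU : IsOpen U) (hf : LocallyLipschitzOn U f) (hs : tsupport f ⊆ U) :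
    LocallyLipschitz f := by
  intro x
  by_cases hx : x ∈ tsupport f
  · obtain ⟨K, t, ht, hK⟩ := hf (hs hx)
    exact ⟨K, t, by rwa [hU.nhdsWithin_eq (hs hx)] at ht, hK⟩
  · refine ⟨0, (tsupport f)ᶜ, (isClosed_tsupport f).isOpen_compl.mem_nhds hx, ?_⟩
    refine LipschitzOnWith.of_dist_le_mul fun a ha b hb => ?_
    simp [image_eq_zero_of_notMem_tsupport ha, image_eq_zero_of_notMem_tsupport hb]

lemma exists_lipschitzWith_of_hasCompactSupport {E : Type*} [NormedAddCommGroup E] [ProperSpace E]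
    {f : E → ℝ} (hf : LocallyLipschitz f)
    (hc : HasCompactSupport f) : ∃ C, LipschitzWith C f := by
  obtain ⟨R, hR⟩ := hc.isCompact.isBounded.subset_closedBall 0
  obtain ⟨K, hK⟩ := hf.locallyLipschitzOn.exists_lipschitzOnWith_of_compact
    (isCompact_closedBall (0 : E) (R + 1))
  obtain ⟨B, hB⟩ := hc.exists_bound_of_continuous hf.continuous
  have hB0 : 0 ≤ B := (norm_nonneg _).trans (hB 0)
  have hzero : ∀ z, R < ‖z‖ → f z = 0 := fun z hz =>
    image_eq_zero_of_notMem_tsupport fun h => by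
      have := hR h
      rw [mem_closedBall_zero_iff] at this
      linarith
  have key : ∀ a b, ‖a‖ ≤ R → R + 1 < ‖b‖ → |f a - f b| ≤ (K + B) * dist a b := fun a b ha hb => by
    rw [hzero b (by linarith), sub_zero]
    have h1 : 1 ≤ dist a b := by
      rw [dist_comm, dist_eq_norm]
      linarith [norm_sub_norm_le b a]
    calc |f a| ≤ B := hB a
      _ ≤ (K + B) * 1 := by simp
      _ ≤ _ := by gcongr
  refine ⟨K + Real.toNNReal B, LipschitzWith.of_dist_le_mul fun a b => ?_⟩
  rw [NNReal.coe_add, Real.coe_toNNReal _ hB0, Real.dist_eq]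
  by_cases ha : ‖a‖ ≤ R + 1
  · by_cases hb : ‖b‖ ≤ R + 1
    · have := hK.dist_le_mul a (by simpa using ha) b (by simpa using hb)
      rw [Real.dist_eq] at this
      refine this.trans ?_
      gcongr
      simpa using hB0
    · by_cases ha' : ‖a‖ ≤ R
      · exact key a b ha' (not_le.1 hb)
      · rw [hzero a (not_le.1 ha'), hzero b (by linarith [not_le.1 hb]), sub_zero, abs_zero]
        positivity
  · by_cases hb : ‖b‖ ≤ R
    · rw [abs_sub_comm, dist_comm]
      exact key b a hb (not_le.1 ha)
    · rw [hzero a (by linarith [not_le.1 ha]), hzero b (not_le.1 hb), sub_zero, abs_zero]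
      positivity

variable [FiniteDimensional ℝ E] [MeasurableSpace E] [BorelSpace E] (ν : Measure E)
  [ν.IsAddHaarMeasure]

lemma ae_differentiableAt_of_locallyLipschitzOn {f : E → ℝ} {U : Set E} (hU : IsOpen U)
    (hf : LocallyLipschitzOn U f) : ∀ᵐ y ∂(ν.restrict U), DifferentiableAt ℝ f y := by
  rw [ae_restrict_iff' hU.measurableSet, ae_iff]
  refine measure_null_of_locally_null _ fun x hx => ?_
  simp only [Classical.not_imp, mem_ofPred_eq] at hx
  obtain ⟨K, t, ht, hK⟩ := hf hx.1
  rw [hU.nhdsWithin_eq hx.1] at ht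
  obtain ⟨V, hVt, hV, hxV⟩ := _root_.mem_nhds_iff.1 ht
  refine ⟨_, inter_mem_nhdsWithin _ (hV.mem_nhds hxV), ?_⟩
  have := (hK.mono hVt).ae_differentiableWithinAt_of_mem (μ := ν)
  refine measure_mono_null ?_ (ae_iff.1 this)
  rintro z ⟨hz, hzV⟩
  simp only [Classical.not_imp, mem_ofPred_eq] at hz ⊢
  exact ⟨hzV, fun h => hz.2 (h.differentiableAt (hV.mem_nhds hzV))⟩

lemma integrable_fderiv_of_locallyLipschitz {f : E → ℝ} (hf : LocallyLipschitz f)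
    (hc : HasCompactSupport f) (v : E) : Integrable (fun y => fderiv ℝ f y v) ν := by
  obtain ⟨C, hC⟩ := exists_lipschitzWith_of_hasCompactSupport hf hc
  have hmeas : Measurable fun y => fderiv ℝ f y v := measurable_fderiv_apply_const ℝ f v
  have hsupp : ∀ y ∉ tsupport f, fderiv ℝ f y v = 0 := fun y hy => by
    have : f =ᶠ[𝓝 y] fun _ => 0 := by
      filter_upwards [(isClosed_tsupport f).isOpen_compl.mem_nhds hy] with z hz
      exact image_eq_zero_of_notMem_tsupport hz
    rw [this.fderiv_eq]; simp
  have h1 : IntegrableOn (fun y => fderiv ℝ f y v) (tsupport f) ν := by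
    refine Measure.integrableOn_of_bounded (M := C * ‖v‖) hc.isCompact.measure_lt_top.ne
      hmeas.aestronglyMeasurable (.of_forall fun y => ?_)
    exact (ContinuousLinearMap.le_opNorm _ _).trans (by
      gcongr; exact norm_fderiv_le_of_lipschitz ℝ hC)
  exact (integrableOn_iff_integrable_of_support_subset (fun y hy => by
    by_contra h; exact hy (hsupp y h))).1 h1

lemma integral_fderiv_eq_zero_of_locallyLipschitz {f : E → ℝ} (hf : LocallyLipschitz f)
    (hc : HasCompactSupport f) (v : E) : ∫ y, fderiv ℝ f y v ∂ν = 0 := by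
  obtain ⟨C, hC⟩ := exists_lipschitzWith_of_hasCompactSupport hf hc
  have h1 := (LipschitzWith.const (1 : ℝ) (α := E)).integral_lineDeriv_mul_eq (μ := ν) hC hc (-v)
  have h2 : ∀ y, lineDeriv ℝ (fun _ : E => (1 : ℝ)) y (-v) = 0 := fun y => by simp [lineDeriv]
  simp only [h2, zero_mul, integral_zero, neg_neg, mul_one] at h1
  rw [h1]
  refine integral_congr_ae ?_
  filter_upwards [hC.ae_differentiableAt] with y hy
  exact hy.lineDeriv_eq_fderiv.symm

end LocallyLipschitz

section Divergence

variable {m : ℕ} {M : Type*} [TopologicalSpace M] [ChartedSpace (Euc m) M]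

/-- `f` is locally Lipschitz in all charts. -/
def ChartLipschitz (m : ℕ) {M : Type*} [TopologicalSpace M] [ChartedSpace (Euc m) M] (f : M → ℝ) :
    Prop :=
  ∀ p : M, LocallyLipschitzOn (chartAt (Euc m) p).target
    (fun y => f ((chartAt (Euc m) p).symm y))

lemma ChartLipschitz.mul {f g : M → ℝ} (hf : ChartLipschitz m f) (hg : ChartLipschitz m g) :
    ChartLipschitz m (fun x => f x * g x) :=
  fun p => locallyLipschitzOn_mul (hf p) (hg p)

lemma mapsTo_chart_symm_inter (p : M) (Ω : Set M) :
    MapsTo (chartAt (Euc m) p) (Ω ∩ (chartAt (Euc m) p).source)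
      ((chartAt (Euc m) p).target ∩ (chartAt (Euc m) p).symm ⁻¹' Ω) := fun x hx => by
  refine ⟨(chartAt (Euc m) p).map_source hx.2, ?_⟩
  rw [mem_preimage, (chartAt (Euc m) p).left_inv hx.2]
  exact hx.1

lemma contDiffOn_comp_chart_symm [IsManifold (𝓡 m) ∞ M] {f : M → ℝ} {Ω : Set M}
    (hf : ContMDiffOn (𝓡 m) 𝓘(ℝ, ℝ) 1 f Ω) (p : M) :
    ContDiffOn ℝ 1 (fun y => f ((chartAt (Euc m) p).symm y))
      ((chartAt (Euc m) p).target ∩ (chartAt (Euc m) p).symm ⁻¹' Ω) := by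
  have h3 : ContMDiffOn (𝓡 m) (𝓡 m) 1 (chartAt (Euc m) p).symm (chartAt (Euc m) p).target :=
    (contMDiffOn_chart_symm (n := ∞)).of_le (by norm_cast)
  exact contMDiffOn_iff_contDiffOn.1 (hf.comp (h3.mono inter_subset_left) fun y hy => hy.2)

lemma chartLipschitz_of_contMDiffOn [IsManifold (𝓡 m) ∞ M] {f : M → ℝ} {Ω : Set M}
    (hΩ : IsOpen Ω) (hf : ContMDiffOn (𝓡 m) 𝓘(ℝ, ℝ) 1 f Ω) (hs : tsupport f ⊆ Ω) :
    ChartLipschitz m f := by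
  intro p y hy
  have hnhds := (chartAt (Euc m) p).open_target.mem_nhds hy
  by_cases hyΩ : (chartAt (Euc m) p).symm y ∈ tsupport f
  · have hU := (chartAt (Euc m) p).isOpen_inter_preimage_symm hΩ
    obtain ⟨K, t, ht, hK⟩ := locallyLipschitzOn_of_contDiffOn hU
      (contDiffOn_comp_chart_symm hf p) ⟨hy, hs hyΩ⟩
    rw [hU.nhdsWithin_eq ⟨hy, hs hyΩ⟩] at ht
    exact ⟨K, t, mem_nhdsWithin_of_mem_nhds ht, hK⟩
  · refine ⟨0, _, mem_nhdsWithin_of_mem_nhds (((chartAt (Euc m) p).isOpen_inter_preimage_symm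
      (isClosed_tsupport f).isOpen_compl).mem_nhds ⟨hy, hyΩ⟩), ?_⟩
    refine LipschitzOnWith.of_dist_le_mul fun a ha b hb => ?_
    simp [image_eq_zero_of_notMem_tsupport ha.2, image_eq_zero_of_notMem_tsupport hb.2]

lemma differential_eq_zero_of_notMem_tsupport {f : M → ℝ} {x : M} (hx : x ∉ tsupport f)
    (v : Euc m) : differential f x v = 0 := by
  have : f =ᶠ[𝓝 x] fun _ => 0 := by
    filter_upwards [(isClosed_tsupport f).isOpen_compl.mem_nhds hx] with z hz
    exact image_eq_zero_of_notMem_tsupport hz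
  rw [differential, this.mfderiv_eq, mfderiv_const]
  rfl

variable [RiemannianBundle (fun x : M => TangentSpace (𝓡 m) x)]

/-- The divergence of `X` at `x`, computed in the chart around `p`. -/
def coordDiv (p : M) (X : ∀ x : M, TangentSpace (𝓡 m) x) (x : M) : ℝ :=
  (volDensity p (chartAt (Euc m) p x))⁻¹ *
    ∑ i : Fin m, fderiv ℝ (fun y : Euc m => volDensity p y * coordComp p X i y)
      (chartAt (Euc m) p x) (EuclideanSpace.single i 1)

variable {Ω : Set M} {X : ∀ x : M, TangentSpace (𝓡 m) x}

/-- The flux of `f X` through the `i`-th coordinate direction, extended by zero. -/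
def coordFlux (p : M) (f : M → ℝ) (X : ∀ x : M, TangentSpace (𝓡 m) x) (i : Fin m) : Euc m → ℝ :=
  (chartAt (Euc m) p).target.indicator
    fun y => f ((chartAt (Euc m) p).symm y) * (volDensity p y * coordComp p X i y)

lemma tsupport_coordFlux_subset {p : M} {f : M → ℝ} (hc : HasCompactSupport f)
    (hs : tsupport f ⊆ Ω ∩ (chartAt (Euc m) p).source) (i : Fin m) :
    tsupport (coordFlux p f X i) ⊆ chartAt (Euc m) p '' tsupport f := by
  refine closure_minimal (fun y hy => ?_) (hc.isCompact.image_of_continuousOn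
    ((chartAt (Euc m) p).continuousOn.mono fun x hx => (hs hx).2)).isClosed
  rw [Function.mem_support, coordFlux, indicator_apply_ne_zero] at hy
  have hne := left_ne_zero_of_mul (Function.mem_support.1 hy.2)
  exact ⟨_, subset_tsupport _ hne, (chartAt (Euc m) p).right_inv hy.1⟩

lemma hasCompactSupport_coordFlux {p : M} {f : M → ℝ} (hc : HasCompactSupport f)
    (hs : tsupport f ⊆ Ω ∩ (chartAt (Euc m) p).source) (i : Fin m) :
    HasCompactSupport (coordFlux p f X i) :=
  (hc.isCompact.image_of_continuousOn ((chartAt (Euc m) p).continuousOn.mono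
    fun _ hx => (hs hx).2)).of_isClosed_subset (isClosed_tsupport _)
      (tsupport_coordFlux_subset hc hs i)

variable [IsManifold (𝓡 m) ∞ M]
  [IsContMDiffRiemannianBundle (𝓡 m) ∞ (Euc m) (fun x : M => TangentSpace (𝓡 m) x)]

lemma contDiffOn_volDensity_mul_coordComp
    (hX : ContMDiffOn (𝓡 m) (𝓡 m).tangent 1
      (fun x => (⟨x, X x⟩ : TangentBundle (𝓡 m) M)) Ω) (p : M) (i : Fin m) :
    ContDiffOn ℝ 1 (fun y : Euc m => volDensity p y * coordComp p X i y)
      ((chartAt (Euc m) p).target ∩ (chartAt (Euc m) p).symm ⁻¹' Ω) :=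
  ((contDiffOn_volDensity p).mono inter_subset_left).mul (contDiffOn_coordComp hX p i)

lemma continuousOn_coordDiv (hΩ : IsOpen Ω)
    (hX : ContMDiffOn (𝓡 m) (𝓡 m).tangent 1
      (fun x => (⟨x, X x⟩ : TangentBundle (𝓡 m) M)) Ω) (p : M) :
    ContinuousOn (coordDiv p X) (Ω ∩ (chartAt (Euc m) p).source) := by
  have hU := (chartAt (Euc m) p).isOpen_inter_preimage_symm hΩ
  have hmaps := mapsTo_chart_symm_inter (m := m) p Ω
  have hcont : ContinuousOn (chartAt (Euc m) p) (Ω ∩ (chartAt (Euc m) p).source) :=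
    (chartAt (Euc m) p).continuousOn.mono inter_subset_right
  refine ContinuousOn.mul ?_ (continuousOn_finsetSum _ fun i _ => ?_)
  · refine ContinuousOn.inv₀ ?_ fun x hx =>
      (volDensity_pos ((chartAt (Euc m) p).map_source hx.2)).ne'
    exact ((contDiffOn_volDensity p).continuousOn.mono inter_subset_left).comp hcont hmaps
  · have h1 := (contDiffOn_volDensity_mul_coordComp hX p i).continuousOn_fderiv_of_isOpen hU le_rfl
    exact (h1.clm_apply continuousOn_const).comp hcont hmaps

lemma locallyLipschitz_coordFlux (hΩ : IsOpen Ω)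
    (hX : ContMDiffOn (𝓡 m) (𝓡 m).tangent 1
      (fun x => (⟨x, X x⟩ : TangentBundle (𝓡 m) M)) Ω)
    {p : M} {f : M → ℝ} (hf : ChartLipschitz m f) (hc : HasCompactSupport f)
    (hs : tsupport f ⊆ Ω ∩ (chartAt (Euc m) p).source) (i : Fin m) :
    LocallyLipschitz (coordFlux p f X i) := by
  have hU := (chartAt (Euc m) p).isOpen_inter_preimage_symm hΩ
  refine locallyLipschitz_of_tsupport_subset hU ?_ ((tsupport_coordFlux_subset hc hs i).trans ?_)
  · have h1 := locallyLipschitzOn_mul ((hf p).mono inter_subset_left)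
      (locallyLipschitzOn_of_contDiffOn hU (contDiffOn_volDensity_mul_coordComp hX p i))
    intro y hy
    obtain ⟨K, t, ht, hK⟩ := h1 hy
    refine ⟨K, t ∩ ((chartAt (Euc m) p).target ∩ (chartAt (Euc m) p).symm ⁻¹' Ω),
      inter_mem ht self_mem_nhdsWithin, ?_⟩
    refine LipschitzOnWith.of_dist_le_mul fun a ha b hb => ?_
    rw [coordFlux, indicator_of_mem ha.2.1, indicator_of_mem hb.2.1]
    exact hK.dist_le_mul a ha.1 b hb.1
  · exact ((mapsTo_chart_symm_inter p Ω).mono_left hs).image_subset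

lemma sum_fderiv_coordFlux (hΩ : IsOpen Ω)
    (hX : ContMDiffOn (𝓡 m) (𝓡 m).tangent 1
      (fun x => (⟨x, X x⟩ : TangentBundle (𝓡 m) M)) Ω)
    {p : M} {f : M → ℝ} (hc : HasCompactSupport f)
    (hs : tsupport f ⊆ Ω ∩ (chartAt (Euc m) p).source) {y : Euc m}
    (hy : y ∈ (chartAt (Euc m) p).target)
    (hd : DifferentiableAt ℝ (fun y => f ((chartAt (Euc m) p).symm y)) y) :
    ∑ i, fderiv ℝ (coordFlux p f X i) y (EuclideanSpace.single i 1) =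
      volDensity p y * (f ((chartAt (Euc m) p).symm y) * coordDiv p X ((chartAt (Euc m) p).symm y) +
        differential f ((chartAt (Euc m) p).symm y) (X ((chartAt (Euc m) p).symm y))) := by
  set x := (chartAt (Euc m) p).symm y with hx
  have hxs : x ∈ (chartAt (Euc m) p).source := (chartAt (Euc m) p).map_target hy
  have hex : chartAt (Euc m) p x = y := (chartAt (Euc m) p).right_inv hy
  by_cases hxt : x ∈ tsupport f
  · have hU := (chartAt (Euc m) p).isOpen_inter_preimage_symm hΩ
    have hyU : y ∈ (chartAt (Euc m) p).target ∩ (chartAt (Euc m) p).symm ⁻¹' Ω := ⟨hy, (hs hxt).1⟩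
    have hmd : MDifferentiableAt (𝓡 m) 𝓘(ℝ, ℝ) f x :=
      mdifferentiableAt_of_comp_chart_symm hxs (by rwa [hex])
    have hfd := (hasFDerivAt_comp_chart_symm hxs hmd)
    rw [hex] at hfd
    have hZ : ∀ i, DifferentiableAt ℝ (fun y : Euc m => volDensity p y * coordComp p X i y) y :=
      fun i => ((contDiffOn_volDensity_mul_coordComp hX p i).contDiffAt
        (hU.mem_nhds hyU)).differentiableAt one_ne_zero
    have hflux : ∀ i, fderiv ℝ (coordFlux p f X i) y (EuclideanSpace.single i 1) =
        f x * fderiv ℝ (fun y : Euc m => volDensity p y * coordComp p X i y) y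
          (EuclideanSpace.single i 1) + volDensity p y * (coordComp p X i y *
          differential f x (symmDeriv p y (EuclideanSpace.single i 1))) := fun i => by
      have heq : coordFlux p f X i =ᶠ[𝓝 y] fun y => f ((chartAt (Euc m) p).symm y) *
          (volDensity p y * coordComp p X i y) := by
        filter_upwards [(chartAt (Euc m) p).open_target.mem_nhds hy] with z hz
        exact indicator_of_mem hz _
      rw [heq.fderiv_eq, (hfd.fun_mul (hZ i).hasFDerivAt).fderiv]
      simp only [add_apply, smul_apply, smul_eq_mul,
        ContinuousLinearMap.comp_apply, ← hx]
      ring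
    have hXx : differential f x (X x) = ∑ i, coordComp p X i y *
        differential f x (symmDeriv p y (EuclideanSpace.single i 1)) := by
      have h1 : symmDeriv p y (chartDeriv p x (X x)) = X x := symmDeriv_chartDeriv' hy _
      conv_lhs => rw [← h1, euc_eq_sum (chartDeriv p x (X x))]
      simp only [map_sum, map_smul, smul_eq_mul]
      rfl
    simp only [hflux]
    rw [Finset.sum_add_distrib, ← Finset.mul_sum, ← Finset.mul_sum, ← hXx, coordDiv, hex]
    have := (volDensity_pos hy).ne'
    field_simp
  · have h0 : ∀ i, fderiv ℝ (coordFlux p f X i) y = 0 := fun i => by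
      have hynot : y ∉ tsupport (coordFlux p f X i) := fun h => by
        obtain ⟨z, hz, hzy⟩ := tsupport_coordFlux_subset hc hs i h
        rw [hx, ← hzy, (chartAt (Euc m) p).left_inv (hs hz).2] at hxt
        exact hxt hz
      have : coordFlux p f X i =ᶠ[𝓝 y] fun _ => 0 := by
        filter_upwards [(isClosed_tsupport _).isOpen_compl.mem_nhds hynot] with z hz
        exact image_eq_zero_of_notMem_tsupport hz
      rw [this.fderiv_eq]; simp
    have h1 : differential f x (X x) = 0 := differential_eq_zero_of_notMem_tsupport hxt _
    simp [h0, image_eq_zero_of_notMem_tsupport hxt, h1]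

variable [MeasurableSpace M] [BorelSpace M]

/-- The divergence theorem in a chart. -/
lemma integral_coordDiv (hΩ : IsOpen Ω)
    (hX : ContMDiffOn (𝓡 m) (𝓡 m).tangent 1
      (fun x => (⟨x, X x⟩ : TangentBundle (𝓡 m) M)) Ω)
    {p : M} {f : M → ℝ} (hf : ChartLipschitz m f) (hc : HasCompactSupport f)
    (hs : tsupport f ⊆ Ω ∩ (chartAt (Euc m) p).source) :
    Integrable (fun x => f x * coordDiv p X x + differential f x (X x)) (rvol m M) ∧
      ∫ x, (f x * coordDiv p X x + differential f x (X x)) ∂(rvol m M) = 0 := by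
  have hzero : ∀ x ∉ (chartAt (Euc m) p).source,
      f x * coordDiv p X x + differential f x (X x) = 0 := fun x hx => by
    have hxt : x ∉ tsupport f := fun h => hx (hs h).2
    have h1 : differential f x (X x) = 0 := differential_eq_zero_of_notMem_tsupport hxt _
    rw [image_eq_zero_of_notMem_tsupport hxt, h1, zero_mul, add_zero]
  have hae : (fun y => ∑ i, fderiv ℝ (coordFlux p f X i) y (EuclideanSpace.single i 1))
      =ᵐ[volume.restrict (chartAt (Euc m) p).target] fun y => volDensity p y *
      (f ((chartAt (Euc m) p).symm y) * coordDiv p X ((chartAt (Euc m) p).symm y) +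
        differential f ((chartAt (Euc m) p).symm y) (X ((chartAt (Euc m) p).symm y))) := by
    filter_upwards [ae_differentiableAt_of_locallyLipschitzOn volume
      (chartAt (Euc m) p).open_target (hf p),
      ae_restrict_mem (chartAt (Euc m) p).open_target.measurableSet] with y hd hy
    exact sum_fderiv_coordFlux hΩ hX hc hs hy hd
  have hint : ∀ i, Integrable (fun y => fderiv ℝ (coordFlux p f X i) y
      (EuclideanSpace.single i 1)) volume := fun i =>
    integrable_fderiv_of_locallyLipschitz volume (locallyLipschitz_coordFlux hΩ hX hf hc hs i)
      (hasCompactSupport_coordFlux hc hs i) _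
  constructor
  · refine (integrableOn_iff_integrable_of_support_subset (s := (chartAt (Euc m) p).source)
      fun x hx => by_contra fun h => hx (hzero x h)).1 ?_
    rw [IntegrableOn, rvol_restrict_source, integrable_chartVol_iff]
    exact ((integrable_finsetSum _ fun i _ => hint i).integrableOn).congr hae
  · rw [← setIntegral_eq_integral_of_forall_compl_eq_zero hzero, rvol_restrict_source,
      integral_chartVol, ← integral_congr_ae hae,
      setIntegral_eq_integral_of_forall_compl_eq_zero,
      integral_finsetSum _ fun i _ => hint i]
    · exact Finset.sum_eq_zero fun i _ => integral_fderiv_eq_zero_of_locallyLipschitz volume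
        (locallyLipschitz_coordFlux hΩ hX hf hc hs i) (hasCompactSupport_coordFlux hc hs i) _
    · intro y hy
      refine Finset.sum_eq_zero fun i _ => ?_
      have hynot : y ∉ tsupport (coordFlux p f X i) := fun h => by
        obtain ⟨z, hz, hzy⟩ := tsupport_coordFlux_subset hc hs i h
        exact hy (hzy ▸ (chartAt (Euc m) p).map_source (hs hz).2)
      have : coordFlux p f X i =ᶠ[𝓝 y] fun _ => 0 := by
        filter_upwards [(isClosed_tsupport _).isOpen_compl.mem_nhds hynot] with z hz
        exact image_eq_zero_of_notMem_tsupport hz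
      rw [this.fderiv_eq]; simp

end Divergence

section GlobalDivergence

lemma hasMFDerivAt_finsetSum {m : ℕ} {M ι : Type*} [TopologicalSpace M] [ChartedSpace (Euc m) M]
    {F : ι → M → ℝ} {x : M} (s : Finset ι)
    (h : ∀ i ∈ s, MDifferentiableAt (𝓡 m) 𝓘(ℝ, ℝ) (F i) x) {L : Euc m →L[ℝ] ℝ}
    (hL : L = ∑ i ∈ s, differential (F i) x) :
    HasMFDerivAt (𝓡 m) 𝓘(ℝ, ℝ) (∑ i ∈ s, F i) x L := by
  classical
  induction s using Finset.induction_on generalizing L with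
  | empty =>
    rw [Finset.sum_empty] at hL ⊢
    subst hL
    exact hasMFDerivAt_const (I := 𝓡 m) (I' := 𝓘(ℝ, ℝ)) (0 : ℝ) x
  | insert i s hi ih =>
    rw [Finset.sum_insert hi] at hL ⊢
    subst hL
    exact (h i (Finset.mem_insert_self i s)).hasMFDerivAt.add
      (ih (fun j hj => h j (Finset.mem_insert_of_mem hj)) rfl)

variable {m : ℕ} {M : Type*} [TopologicalSpace M] [ChartedSpace (Euc m) M]
  [RiemannianBundle (fun x : M => TangentSpace (𝓡 m) x)] [IsManifold (𝓡 m) ∞ M]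
  [IsContMDiffRiemannianBundle (𝓡 m) ∞ (Euc m) (fun x : M => TangentSpace (𝓡 m) x)]
  [MeasurableSpace M] [BorelSpace M]

lemma isLocallyFiniteMeasure_rvol : IsLocallyFiniteMeasure (rvol m M) := by
  refine ⟨fun x => ?_⟩
  have hxs := mem_chart_source (Euc m) x
  have hxt := (chartAt (Euc m) x).map_source hxs
  obtain ⟨K, hKn, hKt, hK⟩ := local_compact_nhds
    ((chartAt (Euc m) x).open_target.mem_nhds hxt)
  refine ⟨(chartAt (Euc m) x).source ∩ chartAt (Euc m) x ⁻¹' K,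
    inter_mem ((chartAt (Euc m) x).open_source.mem_nhds hxs)
      ((chartAt (Euc m) x).continuousAt hxs hKn), ?_⟩
  have h1 : rvol m M ((chartAt (Euc m) x).source ∩ chartAt (Euc m) x ⁻¹' K) ≤
      coordVol m x K := by
    rw [inter_comm, ← Measure.restrict_apply' (chartAt (Euc m) x).open_source.measurableSet,
      rvol_restrict_source, chartVol_apply]
    refine measure_mono fun y hy => ?_
    have := hy.2
    rwa [mem_preimage, mem_preimage, (chartAt (Euc m) x).right_inv hy.1] at this
  refine h1.trans_lt ?_
  rw [coordVol, withDensity_apply _ hK.measurableSet, Measure.restrict_restrict hK.measurableSet,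
    inter_eq_left.2 hKt]
  obtain ⟨C, hC⟩ := hK.exists_bound_of_continuousOn
    ((contDiffOn_volDensity x).continuousOn.mono hKt)
  calc _ ≤ ∫⁻ _ in K, ENNReal.ofReal C := by
        refine setLIntegral_mono' hK.measurableSet fun y hy => ENNReal.ofReal_le_ofReal ?_
        exact (le_abs_self _).trans (hC y hy)
    _ < ⊤ := by
        rw [setLIntegral_const]
        exact ENNReal.mul_lt_top ENNReal.ofReal_lt_top hK.measure_lt_top

lemma isOpenPosMeasure_rvol : (rvol m M).IsOpenPosMeasure := by
  refine ⟨fun U hU ⟨x, hx⟩ h0 => ?_⟩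
  have hxs := mem_chart_source (Euc m) x
  have h1 : chartVol m x U = 0 := le_antisymm
    ((le_iSup (fun p => chartVol m p) x U).trans h0.le) zero_le
  rw [chartVol_apply, coordVol] at h1
  have hV := (chartAt (Euc m) x).isOpen_inter_preimage_symm hU
  rw [withDensity_apply _ hV.measurableSet, Measure.restrict_restrict hV.measurableSet,
    inter_right_comm, inter_self] at h1
  have hpos : 0 < volume ((chartAt (Euc m) x).target ∩ (chartAt (Euc m) x).symm ⁻¹' U) :=
    hV.measure_pos volume ⟨chartAt (Euc m) x x, (chartAt (Euc m) x).map_source hxs, by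
      rwa [mem_preimage, (chartAt (Euc m) x).left_inv hxs]⟩
  rw [lintegral_eq_zero_iff' ((aemeasurable_volDensity x).mono_measure
    (Measure.restrict_mono inter_subset_left le_rfl)), EventuallyEq,
    ae_restrict_iff' hV.measurableSet] at h1
  have h2 : volume ((chartAt (Euc m) x).target ∩ (chartAt (Euc m) x).symm ⁻¹' U) = 0 := by
    refine measure_mono_null (fun y hy => ?_) (ae_iff.1 h1)
    simp only [Pi.zero_apply, ENNReal.ofReal_eq_zero, not_le, Classical.not_imp, mem_ofPred_eq]
    exact ⟨hy, volDensity_pos hy.1⟩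
  exact hpos.ne' h2

variable [SigmaCompactSpace M]

lemma ChartLipschitz.ae_mdifferentiableAt {f : M → ℝ} (hf : ChartLipschitz m f) :
    ∀ᵐ x ∂(rvol m M), MDifferentiableAt (𝓡 m) 𝓘(ℝ, ℝ) f x := by
  have := ChartedSpace.secondCountable_of_sigmaCompact (Euc m) M
  rw [ae_iff]
  refine measure_null_of_locally_null _ fun x _ => ?_
  refine ⟨_, inter_mem_nhdsWithin _ ((chartAt (Euc m) x).open_source.mem_nhds
    (mem_chart_source (Euc m) x)), ?_⟩
  rw [← Measure.restrict_apply' (chartAt (Euc m) x).open_source.measurableSet,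
    rvol_restrict_source, ← ae_iff]
  refine ae_chartVol_of_ae ?_
  filter_upwards [ae_differentiableAt_of_locallyLipschitzOn volume
      (chartAt (Euc m) x).open_target (hf x),
      ae_restrict_mem (chartAt (Euc m) x).open_target.measurableSet] with y hd hy
  refine mdifferentiableAt_of_comp_chart_symm ((chartAt (Euc m) x).map_target hy) ?_
  rwa [(chartAt (Euc m) x).right_inv hy]

variable [T2Space M] {Ω : Set M} {X : ∀ x : M, TangentSpace (𝓡 m) x}

/-- The divergence does not depend on the chart in which it is computed. -/
lemma coordDiv_eqOn (hΩ : IsOpen Ω)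
    (hX : ContMDiffOn (𝓡 m) (𝓡 m).tangent 1
      (fun x => (⟨x, X x⟩ : TangentBundle (𝓡 m) M)) Ω) (p q : M) :
    EqOn (coordDiv p X) (coordDiv q X)
      (Ω ∩ (chartAt (Euc m) p).source ∩ (chartAt (Euc m) q).source) := by
  have := isLocallyFiniteMeasure_rvol (m := m) (M := M)
  have := isOpenPosMeasure_rvol (m := m) (M := M)
  have := ChartedSpace.secondCountable_of_sigmaCompact (Euc m) M
  set W := Ω ∩ (chartAt (Euc m) p).source ∩ (chartAt (Euc m) q).source
  have hW : IsOpen W :=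
    (hΩ.inter (chartAt (Euc m) p).open_source).inter (chartAt (Euc m) q).open_source
  have hp : ContinuousOn (coordDiv p X) W :=
    (continuousOn_coordDiv hΩ hX p).mono inter_subset_left
  have hq : ContinuousOn (coordDiv q X) W :=
    (continuousOn_coordDiv hΩ hX q).mono fun x hx => ⟨hx.1.1, hx.2⟩
  refine Measure.eqOn_open_of_ae_eq (μ := rvol m M) ?_ hW hp hq
  have key : ∀ᵐ x ∂(rvol m M), x ∈ W → coordDiv p X x - coordDiv q X x = 0 := by
    refine IsOpen.ae_eq_zero_of_integral_contMDiff_smul_eq_zero (𝓡 m) hW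
      ((hp.sub hq).locallyIntegrableOn hW.measurableSet) fun g hg hgc hgs => ?_
    have hgl : ChartLipschitz m g :=
      chartLipschitz_of_contMDiffOn isOpen_univ (hg.of_le (by norm_cast)).contMDiffOn (subset_univ _)
    obtain ⟨i1, e1⟩ := integral_coordDiv hΩ hX hgl hgc (p := p) (hgs.trans inter_subset_left)
    obtain ⟨i2, e2⟩ := integral_coordDiv hΩ hX hgl hgc (p := q)
      (hgs.trans fun x hx => ⟨hx.1.1, hx.2⟩)
    have := integral_sub i1 i2
    rw [e1, e2, sub_zero] at this
    rw [← this]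
    refine integral_congr_ae (.of_forall fun x => ?_)
    simp only [smul_eq_mul]
    ring
  rw [EventuallyEq, ae_restrict_iff' hW.measurableSet]
  filter_upwards [key] with x hx hxW
  exact sub_eq_zero.1 (hx hxW)

lemma rdiv_eqOn_coordDiv (hΩ : IsOpen Ω)
    (hX : ContMDiffOn (𝓡 m) (𝓡 m).tangent 1
      (fun x => (⟨x, X x⟩ : TangentBundle (𝓡 m) M)) Ω) (p : M) :
    EqOn (rdiv X) (coordDiv p X) (Ω ∩ (chartAt (Euc m) p).source) := fun x hx =>
  coordDiv_eqOn hΩ hX x p ⟨⟨hx.1, mem_chart_source _ x⟩, hx.2⟩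

/-- The divergence theorem for `f X`, with `f` locally Lipschitz with compact support. -/
theorem integral_mul_rdiv_add_differential (hΩ : IsOpen Ω)
    (hX : ContMDiffOn (𝓡 m) (𝓡 m).tangent 1
      (fun x => (⟨x, X x⟩ : TangentBundle (𝓡 m) M)) Ω)
    {f : M → ℝ} (hf : ChartLipschitz m f) (hc : HasCompactSupport f) (hs : tsupport f ⊆ Ω) :
    Integrable (fun x => f x * rdiv X x + differential f x (X x)) (rvol m M) ∧
      ∫ x, (f x * rdiv X x + differential f x (X x)) ∂(rvol m M) = 0 := by
  obtain ⟨χ, hχ⟩ := SmoothPartitionOfUnity.exists_isSubordinate_chartAt_source (𝓡 m) M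
  have hfin : {i | (Function.support (χ i) ∩ tsupport f).Nonempty}.Finite :=
    χ.locallyFinite.finite_nonempty_inter_compact hc.isCompact
  set I := hfin.toFinset with hI
  let F : M → M → ℝ := fun i x => χ i x * f x
  have hFt : ∀ i, tsupport (F i) ⊆ tsupport f := fun i => tsupport_mul_subset_right
  have hFs : ∀ i, tsupport (F i) ⊆ Ω ∩ (chartAt (Euc m) i).source := fun i x hx =>
    ⟨hs (hFt i hx), hχ i (tsupport_mul_subset_left hx)⟩
  have hFc : ∀ i, HasCompactSupport (F i) := fun i => hc.mul_left
  have hFl : ∀ i, ChartLipschitz m (F i) := fun i =>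
    (chartLipschitz_of_contMDiffOn isOpen_univ
      ((χ i).contMDiff.of_le (by norm_cast)).contMDiffOn (subset_univ _)).mul hf
  have hsum : ∀ x, f x = ∑ i ∈ I, F i x := fun x => by
    by_cases hx : x ∈ tsupport f
    · have h1 : ∑ i ∈ I, χ i x = 1 := by
        rw [← finsum_eq_sum_of_support_subset, χ.sum_eq_one (mem_univ x)]
        intro i hi
        simp only [hI, Finite.coe_toFinset]
        exact ⟨x, hi, hx⟩
      rw [← Finset.sum_mul, h1, one_mul]
    · simp [F, image_eq_zero_of_notMem_tsupport hx]
  have hloc : ∀ i, Integrable (fun x => F i x * rdiv X x + differential (F i) x (X x)) (rvol m M) ∧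
      ∫ x, (F i x * rdiv X x + differential (F i) x (X x)) ∂(rvol m M) = 0 := fun i => by
    have heq : (fun x => F i x * rdiv X x + differential (F i) x (X x)) =
        fun x => F i x * coordDiv i X x + differential (F i) x (X x) := by
      funext x
      by_cases hx : x ∈ tsupport (F i)
      · rw [rdiv_eqOn_coordDiv hΩ hX i (hFs i hx)]
      · rw [image_eq_zero_of_notMem_tsupport hx, zero_mul, zero_mul]
    have := integral_coordDiv hΩ hX (hFl i) (hFc i) (hFs i)
    rw [heq]
    exact this
  have hae : (fun x => ∑ i ∈ I, (F i x * rdiv X x + differential (F i) x (X x)))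
      =ᵐ[rvol m M] fun x => f x * rdiv X x + differential f x (X x) := by
    have hall : ∀ᵐ x ∂(rvol m M), ∀ i ∈ I, MDifferentiableAt (𝓡 m) 𝓘(ℝ, ℝ) (F i) x :=
      (Finset.eventually_all I).2 fun i _ => (hFl i).ae_mdifferentiableAt
    filter_upwards [hall] with x hx
    have hd : differential (m := m) f x = ∑ i ∈ I, differential (F i) x := by
      have h1 : HasMFDerivAt (𝓡 m) 𝓘(ℝ, ℝ) (∑ i ∈ I, F i) x (∑ i ∈ I, differential (F i) x) :=
        hasMFDerivAt_finsetSum I hx rfl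
      have h2 : f = ∑ i ∈ I, F i := by
        funext z
        rw [hsum z, Finset.sum_apply]
      rw [differential, h2]
      exact h1.mfderiv
    rw [Finset.sum_add_distrib, ← Finset.sum_mul, ← hsum, hd]
    congr 1
    exact (sum_apply I (fun i => differential (F i) x) (X x)).symm
  refine ⟨(integrable_finsetSum _ fun i _ => (hloc i).1).congr hae, ?_⟩
  rw [← integral_congr_ae hae, integral_finsetSum _ fun i _ => (hloc i).1]
  exact Finset.sum_eq_zero fun i _ => (hloc i).2

end GlobalDivergence

section Flux

section Weight

/-- The weight `λ(ψ - γ) e^{-h}` on `Ω`, with `λ` a smooth transition, extended by zero. -/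
def truncWeight {M : Type*} (Ω : Set M) (ψ h : M → ℝ) (γ : ℝ) : M → ℝ :=
  Ω.indicator fun x => Real.smoothTransition (ψ x - γ) * Real.exp (-h x)

variable {M : Type*} {Ω : Set M} {ψ h : M → ℝ} {γ : ℝ}

lemma truncWeight_nonneg (x : M) : 0 ≤ truncWeight Ω ψ h γ x :=
  indicator_nonneg (fun _ _ => mul_nonneg (Real.smoothTransition.nonneg _) (Real.exp_nonneg _)) x

lemma truncWeight_le {x : M} (hx : x ∈ Ω) : truncWeight Ω ψ h γ x ≤ Real.exp (-h x) := by
  rw [truncWeight, indicator_of_mem hx]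
  exact mul_le_of_le_one_left (Real.exp_nonneg _) (Real.smoothTransition.le_one _)

lemma truncWeight_pos {x : M} (hx : x ∈ Ω) (hγ : γ < ψ x) : 0 < truncWeight Ω ψ h γ x := by
  rw [truncWeight, indicator_of_mem hx]
  exact mul_pos (Real.smoothTransition.pos_of_pos (sub_pos.2 hγ)) (Real.exp_pos _)

lemma truncWeight_ne_zero {x : M} (hx : truncWeight Ω ψ h γ x ≠ 0) : x ∈ Ω ∧ γ < ψ x := by
  rw [truncWeight, indicator_apply_ne_zero] at hx
  refine ⟨hx.1, ?_⟩
  by_contra hle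
  exact (left_ne_zero_of_mul (Function.mem_support.1 hx.2))
    (Real.smoothTransition.zero_of_nonpos (by linarith))

end Weight

section Topological

variable {m : ℕ} {M : Type*} [TopologicalSpace M] [ChartedSpace (Euc m) M]

lemma inner_rgrad [RiemannianBundle (fun x : M => TangentSpace (𝓡 m) x)] (f : M → ℝ) (x : M)
    (v : TangentSpace (𝓡 m) x) : inner ℝ (rgrad f x) v = differential f x v := by
  have : FiniteDimensional ℝ (TangentSpace (𝓡 m) x) :=
    inferInstanceAs (FiniteDimensional ℝ (Euc m))
  have : CompleteSpace (TangentSpace (𝓡 m) x) := FiniteDimensional.complete ℝ _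
  exact InnerProductSpace.toDual_symm_apply (𝕜 := ℝ) (E := TangentSpace (𝓡 m) x)

/-- The curve through `x` with velocity `v` which is a straight line in the chart around `x`. -/
def chartLine (x : M) (v : Euc m) (t : ℝ) : M :=
  (chartAt (Euc m) x).symm (chartAt (Euc m) x x + t • chartDeriv x x v)

lemma chartLine_zero (x : M) (v : Euc m) : chartLine x v 0 = x := by
  simp [chartLine]

lemma hasDerivAt_comp_chartLine [IsManifold (𝓡 m) ∞ M] {f : M → ℝ} {x : M}
    (hd : MDifferentiableAt (𝓡 m) 𝓘(ℝ, ℝ) f x) (v : Euc m) :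
    HasDerivAt (fun t => f (chartLine x v t)) (differential f x v) 0 := by
  have hx := mem_chart_source (Euc m) x
  have h1 : HasDerivAt (fun t : ℝ => chartAt (Euc m) x x + t • chartDeriv x x v)
      (chartDeriv x x v) 0 := by
    simpa using ((hasDerivAt_id (0 : ℝ)).smul_const (chartDeriv x x v)).const_add
      (chartAt (Euc m) x x)
  have h2 := HasFDerivAt.comp_hasDerivAt_of_eq (0 : ℝ) (hasFDerivAt_comp_chart_symm hx hd) h1
    (by simp)
  have h3 : differential f x v =
      differential f x (symmDeriv x (chartAt (Euc m) x x) (chartDeriv x x v)) := by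
    rw [symmDeriv_chartDeriv hx]
  rw [h3]
  exact h2

lemma differential_mul [IsManifold (𝓡 m) ∞ M] {f g : M → ℝ} {x : M}
    (hf : MDifferentiableAt (𝓡 m) 𝓘(ℝ, ℝ) f x) (hg : MDifferentiableAt (𝓡 m) 𝓘(ℝ, ℝ) g x)
    (v : Euc m) : differential (fun x => f x * g x) x v =
      f x * differential g x v + g x * differential f x v := by
  have h1 := hasDerivAt_comp_chartLine (hf.mul hg) v
  have h2 := (hasDerivAt_comp_chartLine hf v).fun_mul (hasDerivAt_comp_chartLine hg v)
  rw [chartLine_zero] at h2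
  rw [show differential (fun x => f x * g x) x v = _ from h1.unique h2]
  ring

lemma differential_eq_zero_of_isLocalExtr [IsManifold (𝓡 m) ∞ M] {f : M → ℝ} {x : M}
    (hf : IsLocalExtr f x) (hd : MDifferentiableAt (𝓡 m) 𝓘(ℝ, ℝ) f x) (v : Euc m) :
    differential f x v = 0 := by
  have hx := mem_chart_source (Euc m) x
  have h1 := hasFDerivAt_comp_chart_symm hx hd
  have h2 : IsLocalExtr (fun y => f ((chartAt (Euc m) x).symm y)) (chartAt (Euc m) x x) := by
    refine IsExtrFilter.comp_tendsto (g := (chartAt (Euc m) x).symm) (l := 𝓝 x) ?_ ?_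
    · rw [(chartAt (Euc m) x).left_inv hx]; exact hf
    · have := (chartAt (Euc m) x).symm.continuousAt ((chartAt (Euc m) x).map_source hx)
      rwa [ContinuousAt, (chartAt (Euc m) x).left_inv hx] at this
  have h3 := h2.hasFDerivAt_eq_zero h1
  rw [← symmDeriv_chartDeriv hx v]
  exact congrArg (fun L => L (chartDeriv x x v)) h3

variable {Ω : Set M} {ψ h : M → ℝ} {γ : ℝ}

lemma tsupport_truncWeight_subset (hΩ : IsOpen Ω) (hψc : ContinuousOn ψ (closure Ω))
    (hγ : ∀ x ∈ frontier Ω, ψ x < γ) : tsupport (truncWeight Ω ψ h γ) ⊆ Ω := by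
  have h1 : tsupport (truncWeight Ω ψ h γ) ⊆ closure Ω ∩ ψ ⁻¹' Ici γ := by
    refine closure_minimal (fun x hx => ?_)
      (hψc.preimage_isClosed_of_isClosed isClosed_closure isClosed_Ici)
    obtain ⟨h1, h2⟩ := truncWeight_ne_zero hx
    exact ⟨subset_closure h1, h2.le⟩
  intro x hx
  by_contra hxΩ
  have hfr : x ∈ frontier Ω := by
    rw [hΩ.frontier_eq]
    exact ⟨(h1 hx).1, hxΩ⟩
  exact absurd (hγ x hfr) (not_lt.2 (h1 hx).2)

lemma contMDiffOn_truncWeight (hψ : ContMDiffOn (𝓡 m) 𝓘(ℝ, ℝ) 1 ψ Ω)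
    (hh : ContMDiffOn (𝓡 m) 𝓘(ℝ, ℝ) 1 h Ω) :
    ContMDiffOn (𝓡 m) 𝓘(ℝ, ℝ) 1 (truncWeight Ω ψ h γ) Ω := by
  have h1 : ContDiff ℝ 1 fun z : ℝ × ℝ => Real.smoothTransition (z.1 - γ) * Real.exp (-z.2) :=
    (Real.smoothTransition.contDiff.comp (contDiff_fst.sub contDiff_const)).mul
      (contDiff_snd.neg.exp)
  refine (h1.contMDiff.comp_contMDiffOn (hψ.prodMk_space hh)).congr fun x hx => ?_
  rw [truncWeight, indicator_of_mem hx]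
  rfl

lemma continuous_truncWeight (hΩ : IsOpen Ω) (hψ : ContMDiffOn (𝓡 m) 𝓘(ℝ, ℝ) 1 ψ Ω)
    (hψc : ContinuousOn ψ (closure Ω)) (hh : ContMDiffOn (𝓡 m) 𝓘(ℝ, ℝ) 1 h Ω)
    (hγ : ∀ x ∈ frontier Ω, ψ x < γ) : Continuous (truncWeight Ω ψ h γ) :=
  (contMDiffOn_truncWeight hψ hh).continuousOn.continuous_of_tsupport_subset hΩ
    (tsupport_truncWeight_subset hΩ hψc hγ)

lemma differential_truncWeight [IsManifold (𝓡 m) ∞ M] (hΩ : IsOpen Ω)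
    (hψ : ContMDiffOn (𝓡 m) 𝓘(ℝ, ℝ) 1 ψ Ω)
    (hh : ContMDiffOn (𝓡 m) 𝓘(ℝ, ℝ) 1 h Ω) {x : M} (hx : x ∈ Ω) (v : Euc m) :
    differential (truncWeight Ω ψ h γ) x v =
      deriv Real.smoothTransition (ψ x - γ) * Real.exp (-h x) * differential ψ x v
        - truncWeight Ω ψ h γ x * differential h x v := by
  have hnh := hΩ.mem_nhds hx
  have heq : truncWeight Ω ψ h γ =ᶠ[𝓝 x]
      fun x => Real.smoothTransition (ψ x - γ) * Real.exp (-h x) := by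
    filter_upwards [hnh] with z hz
    exact indicator_of_mem hz _
  have hd := (((contMDiffOn_truncWeight (γ := γ) hψ hh).contMDiffAt hnh).mdifferentiableAt
    one_ne_zero).congr_of_eventuallyEq heq.symm
  have d1 := hasDerivAt_comp_chartLine
    ((hψ.contMDiffAt hnh).mdifferentiableAt one_ne_zero) v
  have d2 := hasDerivAt_comp_chartLine
    ((hh.contMDiffAt hnh).mdifferentiableAt one_ne_zero) v
  have d3 : HasDerivAt Real.smoothTransition (deriv Real.smoothTransition (ψ x - γ))
      (ψ (chartLine x v 0) - γ) := by
    rw [chartLine_zero]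
    exact ((Real.smoothTransition.contDiff (n := 1)).differentiable one_ne_zero _).hasDerivAt
  have d4 := (d3.comp (0 : ℝ) (d1.sub_const γ)).fun_mul (d2.fun_neg.exp)
  have := (hasDerivAt_comp_chartLine hd v).unique d4
  rw [differential, heq.mfderiv_eq]
  refine Eq.trans this ?_
  simp only [Function.comp, chartLine_zero]
  rw [truncWeight, indicator_of_mem hx]
  ring

end Topological

section Cutoff

variable {M : Type*} [MetricSpace M]

/-- The radial cutoff equal to `1` on the ball of radius `R` and to `0` off that of radius
`R + ε`. -/
def radialCutoff (o : M) (R ε : ℝ) (x : M) : ℝ := max 0 (min 1 ((R + ε - dist o x) / ε))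

variable {o : M} {R ε : ℝ}

lemma radialCutoff_nonneg (x : M) : 0 ≤ radialCutoff o R ε x := le_max_left _ _

lemma radialCutoff_le_one (x : M) : radialCutoff o R ε x ≤ 1 :=
  max_le zero_le_one (min_le_left _ _)

lemma radialCutoff_eq_one (hε : 0 < ε) {x : M} (hx : dist o x ≤ R) :
    radialCutoff o R ε x = 1 := by
  have : 1 ≤ (R + ε - dist o x) / ε := by rw [le_div_iff₀ hε]; linarith
  rw [radialCutoff, min_eq_left this, max_eq_right zero_le_one]

lemma radialCutoff_eq_zero (hε : 0 < ε) {x : M} (hx : R + ε ≤ dist o x) :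
    radialCutoff o R ε x = 0 := by
  have : (R + ε - dist o x) / ε ≤ 0 := div_nonpos_of_nonpos_of_nonneg (by linarith) hε.le
  rw [radialCutoff, max_eq_left (min_le_of_right_le this)]

lemma abs_radialCutoff_sub_le (hε : 0 < ε) (x y : M) :
    |radialCutoff o R ε x - radialCutoff o R ε y| ≤ ε⁻¹ * dist x y := by
  refine (abs_max_sub_max_le_max _ _ _ _).trans ?_
  rw [sub_self, abs_zero, max_eq_right (abs_nonneg _)]
  refine (abs_min_sub_min_le_max _ _ _ _).trans ?_
  rw [sub_self, abs_zero, max_eq_right (abs_nonneg _), ← sub_div, abs_div, abs_of_pos hε,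
    div_eq_inv_mul]
  gcongr
  rw [sub_sub_sub_cancel_left, dist_comm o y, dist_comm o x, dist_comm x y]
  exact abs_dist_sub_le y x o

lemma continuous_radialCutoff : Continuous (radialCutoff o R ε) := by
  unfold radialCutoff
  fun_prop

lemma hasCompactSupport_radialCutoff [ProperSpace M] (hε : 0 < ε) :
    HasCompactSupport (radialCutoff o R ε) := by
  refine HasCompactSupport.intro (isCompact_closedBall o (R + ε)) fun x hx => ?_
  rw [mem_closedBall, not_le, dist_comm] at hx
  exact radialCutoff_eq_zero hε hx.le

lemma chartLipschitz_radialCutoff {m : ℕ} [ChartedSpace (Euc m) M]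
    [RiemannianBundle (fun x : M => TangentSpace (𝓡 m) x)] [IsRiemannianManifold (𝓡 m) M]
    [IsManifold (𝓡 m) ∞ M]
    [IsContMDiffRiemannianBundle (𝓡 m) ∞ (Euc m) (fun x : M => TangentSpace (𝓡 m) x)]
    (hε : 0 < ε) : ChartLipschitz m (radialCutoff o R ε) := by
  intro p y hy
  obtain ⟨K, t, ht, hK⟩ := locallyLipschitzOn_chart_symm p hy
  refine ⟨Real.toNNReal ε⁻¹ * K, t, ht, LipschitzOnWith.of_dist_le_mul fun a ha b hb => ?_⟩
  rw [Real.dist_eq, NNReal.coe_mul, Real.coe_toNNReal _ (by positivity), mul_assoc]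
  refine (abs_radialCutoff_sub_le hε _ _).trans ?_
  gcongr
  exact hK.dist_le_mul a ha b hb

end Cutoff

section Inequality

variable {m : ℕ} {M : Type*} [MetricSpace M] [ChartedSpace (Euc m) M] [IsManifold (𝓡 m) ∞ M]
  [RiemannianBundle (fun x : M => TangentSpace (𝓡 m) x)]
  [IsContMDiffRiemannianBundle (𝓡 m) ∞ (Euc m) (fun x : M => TangentSpace (𝓡 m) x)]
  [IsRiemannianManifold (𝓡 m) M] {o : M} {R ε : ℝ} {Ω : Set M}
  {X : ∀ x : M, TangentSpace (𝓡 m) x} {ψ h b : M → ℝ} {γ k : ℝ}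

lemma abs_differential_radialCutoff_le (hε : 0 < ε) {x : M}
    {v : TangentSpace (𝓡 m) x} (hv : ‖v‖ ≤ k)
    (hd : MDifferentiableAt (𝓡 m) 𝓘(ℝ, ℝ) (radialCutoff o R ε) x) :
    |differential (radialCutoff o R ε) x v| ≤
      (ball o (R + ε) \ ball o R).indicator (fun _ => k / ε) x := by
  by_cases hx : x ∈ ball o (R + ε) \ ball o R
  · rw [indicator_of_mem hx]
    refine (abs_mfderiv_le_of_lipschitz (inv_nonneg.2 hε.le)
      (abs_radialCutoff_sub_le hε) hd v).trans ?_
    rw [div_eq_inv_mul]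
    gcongr
  · rw [indicator_of_notMem hx]
    have hext : IsLocalExtr (radialCutoff o R ε) x := by
      by_cases hR : dist o x < R
      · refine Or.inr (.of_forall fun z => ?_)
        rw [radialCutoff_eq_one hε hR.le]
        exact radialCutoff_le_one z
      · have hRε : R + ε ≤ dist o x := by
          by_contra hlt
          exact hx ⟨by rw [mem_ball, dist_comm]; linarith, by rw [mem_ball, dist_comm]; exact hR⟩
        refine Or.inl (.of_forall fun z => ?_)
        rw [radialCutoff_eq_zero hε hRε]
        exact radialCutoff_nonneg z
    have h0 : differential (radialCutoff o R ε) x v = 0 :=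
      differential_eq_zero_of_isLocalExtr hext hd _
    rw [h0, abs_zero]

lemma le_mul_rdiv_add_differential (hΩ : IsOpen Ω) (hψ : ContMDiffOn (𝓡 m) 𝓘(ℝ, ℝ) 1 ψ Ω)
    (hh : ContMDiffOn (𝓡 m) 𝓘(ℝ, ℝ) 1 h Ω) (hXk : ∀ x ∈ Ω, ‖X x‖ ≤ k)
    (hmon : ∀ x ∈ Ω, 0 ≤ inner ℝ (rgrad ψ x) (X x)) (hbpos : ∀ x, 0 < b x)
    (hdiv : ∀ x ∈ Ω, b x * ψ x ≤ driftDiv h X x) (hε : 0 < ε) {x : M} (hx : x ∈ Ω)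
    (hd : MDifferentiableAt (𝓡 m) 𝓘(ℝ, ℝ) (radialCutoff o R ε) x) :
    γ * (radialCutoff o R ε x * (b x * truncWeight Ω ψ h γ x)) -
        k / ε * (ball o (R + ε) \ ball o R).indicator (truncWeight Ω ψ h γ) x ≤
      radialCutoff o R ε x * truncWeight Ω ψ h γ x * rdiv X x +
        differential (fun x => radialCutoff o R ε x * truncWeight Ω ψ h γ x) x (X x) := by
  have hρd := ((contMDiffOn_truncWeight (γ := γ) hψ hh).contMDiffAt
    (hΩ.mem_nhds hx)).mdifferentiableAt one_ne_zero
  have e1 : differential (fun x => radialCutoff o R ε x * truncWeight Ω ψ h γ x) x (X x) = _ :=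
    differential_mul hd hρd (X x)
  have e2 : differential (truncWeight Ω ψ h γ) x (X x) = _ :=
    differential_truncWeight hΩ hψ hh hx (X x)
  have e3 := abs_differential_radialCutoff_le hε (hXk x hx) hd
  have e4 := hmon x hx
  have e5 := hdiv x hx
  rw [driftDiv, inner_rgrad] at e5
  rw [inner_rgrad] at e4
  rw [e1, e2]
  have hρ0 : 0 ≤ truncWeight Ω ψ h γ x := truncWeight_nonneg x
  have hφ0 : 0 ≤ radialCutoff o R ε x := radialCutoff_nonneg x
  have hder : 0 ≤ deriv Real.smoothTransition (ψ x - γ) :=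
    Real.smoothTransition.monotone.deriv_nonneg
  have hind : k / ε * (ball o (R + ε) \ ball o R).indicator (truncWeight Ω ψ h γ) x =
      truncWeight Ω ψ h γ x * (ball o (R + ε) \ ball o R).indicator (fun _ => k / ε) x := by
    by_cases hA : x ∈ ball o (R + ε) \ ball o R
    · rw [indicator_of_mem hA, indicator_of_mem hA, mul_comm]
    · rw [indicator_of_notMem hA, indicator_of_notMem hA, mul_zero, mul_zero]
  have hcut : -(truncWeight Ω ψ h γ x *
      (ball o (R + ε) \ ball o R).indicator (fun _ => k / ε) x) ≤
      truncWeight Ω ψ h γ x * differential (radialCutoff o R ε) x (X x) := by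
    rw [← mul_neg]
    exact mul_le_mul_of_nonneg_left (abs_le.1 e3).1 hρ0
  have hbψ : truncWeight Ω ψ h γ x * (γ * b x) ≤
      truncWeight Ω ψ h γ x * (rdiv X x - differential h x (X x)) := by
    rcases eq_or_ne (truncWeight Ω ψ h γ x) 0 with h0 | h0
    · rw [h0, zero_mul, zero_mul]
    · refine mul_le_mul_of_nonneg_left (le_trans ?_ e5) hρ0
      rw [mul_comm]
      exact mul_le_mul_of_nonneg_left (truncWeight_ne_zero h0).2.le (hbpos x).le
  have hφbψ := mul_le_mul_of_nonneg_left hbψ hφ0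
  have hpos : 0 ≤ radialCutoff o R ε x * (deriv Real.smoothTransition (ψ x - γ) *
      Real.exp (-h x) * differential ψ x (X x)) := by positivity
  rw [hind]
  linarith

variable [ProperSpace M] [MeasurableSpace M] [BorelSpace M]

/-- The flux inequality: the weighted integral of `b` over a ball is controlled by the mean growth
of the weighted volume in a shell around the ball. -/
theorem flux_inequality (hΩ : IsOpen Ω)
    (hX : ContMDiffOn (𝓡 m) (𝓡 m).tangent 1
      (fun x => (⟨x, X x⟩ : TangentBundle (𝓡 m) M)) Ω)
    (hψ : ContMDiffOn (𝓡 m) 𝓘(ℝ, ℝ) 1 ψ Ω) (hψc : ContinuousOn ψ (closure Ω))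
    (hγ0 : 0 ≤ γ) (hγ : ∀ x ∈ frontier Ω, ψ x < γ)
    (hh : ContMDiffOn (𝓡 m) 𝓘(ℝ, ℝ) 1 h Ω) (hXk : ∀ x ∈ Ω, ‖X x‖ ≤ k)
    (hmon : ∀ x ∈ Ω, 0 ≤ inner ℝ (rgrad ψ x) (X x)) (hb : Continuous b) (hbpos : ∀ x, 0 < b x)
    (hdiv : ∀ x ∈ Ω, b x * ψ x ≤ driftDiv h X x) (hε : 0 < ε) :
    γ * ∫ x in ball o R, b x * truncWeight Ω ψ h γ x ∂(rvol m M) ≤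
      k / ε * (∫ x in ball o (R + ε), truncWeight Ω ψ h γ x ∂(rvol m M) -
        ∫ x in ball o R, truncWeight Ω ψ h γ x ∂(rvol m M)) := by
  have := isLocallyFiniteMeasure_rvol (m := m) (M := M)
  set ρ := truncWeight Ω ψ h γ with hρ
  set φ := radialCutoff o R ε with hφ
  have hρc : Continuous ρ := continuous_truncWeight hΩ hψ hψc hh hγ
  have hρs : tsupport ρ ⊆ Ω := tsupport_truncWeight_subset hΩ hψc hγ
  have hφc : HasCompactSupport φ := hasCompactSupport_radialCutoff hε
  have hball : ∀ (g : M → ℝ), Continuous g → ∀ r, IntegrableOn g (ball o r) (rvol m M) :=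
    fun g hg r => (hg.continuousOn.integrableOn_compact (isCompact_closedBall o r)).mono_set
      ball_subset_closedBall
  have hfl : ChartLipschitz m (fun x => φ x * ρ x) := (chartLipschitz_radialCutoff hε).mul
    (chartLipschitz_of_contMDiffOn hΩ (contMDiffOn_truncWeight hψ hh) hρs)
  have hfs : tsupport (fun x => φ x * ρ x) ⊆ Ω := tsupport_mul_subset_right.trans hρs
  obtain ⟨hint, hzero⟩ := integral_mul_rdiv_add_differential hΩ hX hfl
    (hφc.mul_right (f' := ρ)) hfs
  have hshell : ball o R ⊆ ball o (R + ε) := ball_subset_ball (by linarith)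
  have hi1 : Integrable (fun x => γ * (φ x * (b x * ρ x))) (rvol m M) := by
    refine Integrable.const_mul (Continuous.integrable_of_hasCompactSupport ?_ ?_) γ
    · exact continuous_radialCutoff.mul (hb.mul hρc)
    · exact hφc.mul_right
  have hi2 : Integrable (fun x => k / ε * (ball o (R + ε) \ ball o R).indicator ρ x)
      (rvol m M) := by
    refine Integrable.const_mul ?_ _
    rw [integrable_indicator_iff (measurableSet_ball.diff measurableSet_ball)]
    exact (hball ρ hρc (R + ε)).mono_set sdiff_subset
  have hae : (fun x => γ * (φ x * (b x * ρ x)) -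
      k / ε * (ball o (R + ε) \ ball o R).indicator ρ x) ≤ᵐ[rvol m M]
      fun x => φ x * ρ x * rdiv X x + differential (fun x => φ x * ρ x) x (X x) := by
    filter_upwards [(chartLipschitz_radialCutoff (m := m) (o := o) (R := R)
      hε).ae_mdifferentiableAt] with x hd
    by_cases hx : x ∈ Ω
    · exact le_mul_rdiv_add_differential hΩ hψ hh hXk hmon hbpos hdiv hε hx hd
    · have h0 : ρ x = 0 := image_eq_zero_of_notMem_tsupport fun h => hx (hρs h)
      have h1 : differential (fun x => φ x * ρ x) x (X x) = 0 :=
        differential_eq_zero_of_notMem_tsupport (fun h => hx (hfs h)) _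
      have h2 : (ball o (R + ε) \ ball o R).indicator ρ x = 0 := by
        rw [indicator_apply_eq_zero]; exact fun _ => h0
      rw [h1, h2, h0]
      simp
  have hle := integral_mono_ae (hi1.sub hi2) hint hae
  rw [hzero] at hle
  have hsub : ∫ x, (γ * (φ x * (b x * ρ x)) -
      k / ε * (ball o (R + ε) \ ball o R).indicator ρ x) ∂(rvol m M) ≤ 0 := hle
  rw [integral_sub hi1 hi2, integral_const_mul, integral_const_mul,
    integral_indicator (measurableSet_ball.diff measurableSet_ball),
    setIntegral_sdiff measurableSet_ball (hball ρ hρc _) hshell] at hsub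
  have hcut : ∫ x in ball o R, b x * ρ x ∂(rvol m M) ≤ ∫ x, φ x * (b x * ρ x) ∂(rvol m M) := by
    rw [← integral_indicator measurableSet_ball]
    refine integral_mono ((integrable_indicator_iff measurableSet_ball).2
      (hball _ (hb.mul hρc) R)) ?_ fun x => ?_
    · exact Continuous.integrable_of_hasCompactSupport
        (continuous_radialCutoff.mul (hb.mul hρc)) hφc.mul_right
    · by_cases hx : x ∈ ball o R
      · rw [indicator_of_mem hx]
        rw [mem_ball, dist_comm] at hx
        simp only [hφ, radialCutoff_eq_one hε hx.le, one_mul]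
        exact le_rfl
      · rw [indicator_of_notMem hx]
        exact mul_nonneg (radialCutoff_nonneg x)
          (mul_nonneg (hbpos x).le (truncWeight_nonneg x))
  have := mul_le_mul_of_nonneg_left hcut hγ0
  linarith

end Inequality

end Flux

section Growth

/-- A discrete Grönwall inequality: no continuity of `H` is required. -/
lemma exp_growth_of_increment_le {H A a : ℝ → ℝ} {R₁ a₁ : ℝ} (hH : ∀ R, R₁ ≤ R → 0 ≤ H R)
    (ha0 : ∀ R, R₁ ≤ R → 0 ≤ a R) (ha : ∀ R, R₁ ≤ R → a R ≤ a₁)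
    (hA : ∀ R, R₁ ≤ R → ∀ ε, 0 < ε → A (R + ε) ≤ A R + ε * a R)
    (hinc : ∀ R, R₁ ≤ R → ∀ ε, 0 < ε → ε * a R * H R ≤ H (R + ε) - H R) {S : ℝ} (hS : R₁ ≤ S) :
    H R₁ * Real.exp (A S - A R₁) ≤ H S := by
  rcases hS.eq_or_lt with rfl | hlt
  · simp
  let u : ℝ → ℝ := fun R => H R * Real.exp (-A R)
  have hu : ∀ R, R₁ ≤ R → 0 ≤ u R := fun R hR => mul_nonneg (hH R hR) (Real.exp_nonneg _)
  have hstep : ∀ R, R₁ ≤ R → ∀ ε, 0 < ε → u R * (1 - (ε * a₁) ^ 2) ≤ u (R + ε) := by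
    intro R hR ε hε
    have ht0 : 0 ≤ ε * a R := mul_nonneg hε.le (ha0 R hR)
    have ht1 : ε * a R ≤ ε * a₁ := mul_le_mul_of_nonneg_left (ha R hR) hε.le
    have h1 : H R * (1 + ε * a R) ≤ H (R + ε) := by linarith [hinc R hR ε hε]
    have h2 : Real.exp (-A R) * Real.exp (-(ε * a R)) ≤ Real.exp (-A (R + ε)) := by
      rw [← Real.exp_add]
      exact Real.exp_le_exp.2 (by linarith [hA R hR ε hε])
    have h3 : 1 - (ε * a₁) ^ 2 ≤ (1 + ε * a R) * Real.exp (-(ε * a R)) := by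
      have h4 : 1 - ε * a R ≤ Real.exp (-(ε * a R)) := Real.one_sub_le_exp_neg _
      nlinarith
    calc u R * (1 - (ε * a₁) ^ 2)
        ≤ u R * ((1 + ε * a R) * Real.exp (-(ε * a R))) :=
          mul_le_mul_of_nonneg_left h3 (hu R hR)
      _ = (H R * (1 + ε * a R)) * (Real.exp (-A R) * Real.exp (-(ε * a R))) := by
          simp only [u]; ring
      _ ≤ H (R + ε) * Real.exp (-A (R + ε)) :=
          mul_le_mul h1 h2 (by positivity) (hH _ (by linarith))
  have hn : ∀ n : ℕ, 0 < n → (S - R₁) * a₁ ≤ n →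
      u R₁ * (1 - ((S - R₁) * a₁) ^ 2 / n) ≤ u S := by
    intro n hn0 hnl
    have hn' : (0 : ℝ) < n := Nat.cast_pos.2 hn0
    set ε := (S - R₁) / n with hε
    have hεpos : 0 < ε := div_pos (by linarith) hn'
    have ha₁ : 0 ≤ a₁ := (ha0 R₁ le_rfl).trans (ha R₁ le_rfl)
    have hδ1 : ε * a₁ ≤ 1 := by
      rw [hε, div_mul_eq_mul_div, div_le_one hn']
      exact hnl
    have hδ0 : 0 ≤ ε * a₁ := by positivity
    have hq : 0 ≤ 1 - (ε * a₁) ^ 2 := by nlinarith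
    have hiter : ∀ j : ℕ, u R₁ * (1 - (ε * a₁) ^ 2) ^ j ≤ u (R₁ + j * ε) := by
      intro j
      induction j with
      | zero => simp
      | succ j ih =>
        have := hstep (R₁ + j * ε) (by nlinarith [(Nat.cast_nonneg j : (0 : ℝ) ≤ j)]) ε hεpos
        rw [pow_succ, ← mul_assoc]
        refine (mul_le_mul_of_nonneg_right ih hq).trans (this.trans_eq ?_)
        push_cast
        ring_nf
    have hlast := hiter n
    rw [show R₁ + n * ε = S by rw [hε]; field_simp; ring] at hlast
    have hbern := one_add_mul_le_pow (show (-2 : ℝ) ≤ -(ε * a₁) ^ 2 by nlinarith) n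
    refine le_trans ?_ hlast
    refine mul_le_mul_of_nonneg_left (le_trans (le_of_eq ?_) (hbern.trans_eq ?_)) (hu R₁ le_rfl)
    · rw [hε]; field_simp; ring
    · ring
  have hlim : Tendsto (fun n : ℕ => u R₁ * (1 - ((S - R₁) * a₁) ^ 2 / n)) atTop (𝓝 (u R₁)) := by
    have := (tendsto_const_div_atTop_nhds_zero_nat (((S - R₁) * a₁) ^ 2)).const_sub 1
    simpa using this.const_mul (u R₁)
  have hle : u R₁ ≤ u S := by
    refine le_of_tendsto hlim ?_
    filter_upwards [eventually_gt_atTop 0, eventually_ge_atTop ⌈(S - R₁) * a₁⌉₊] with n h0 h1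
    exact hn n h0 (Nat.ceil_le.1 h1)
  have := mul_le_mul_of_nonneg_right hle (Real.exp_nonneg (A S))
  simp only [u, mul_assoc, ← Real.exp_add] at this
  rw [show -A S + A S = 0 by ring, Real.exp_zero, mul_one] at this
  rwa [show A S - A R₁ = -A R₁ + A S by ring]

/-- The primitive of `R ^ (-μ)`. -/
def radialGrowth (μ R : ℝ) : ℝ := if μ = 1 then Real.log R else R ^ (1 - μ) / (1 - μ)

lemma radialGrowth_add_le {μ : ℝ} (hμ : μ ∈ Icc (0 : ℝ) 1) {R ε : ℝ} (hR : 0 < R) (hε : 0 < ε) :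
    radialGrowth μ (R + ε) ≤ radialGrowth μ R + ε * R ^ (-μ) := by
  have hfac : R + ε = R * (1 + ε / R) := by field_simp
  by_cases h1 : μ = 1
  · simp only [radialGrowth, h1, if_true]
    rw [hfac, Real.log_mul hR.ne' (by positivity), Real.rpow_neg_one, ← div_eq_mul_inv]
    have := Real.log_le_sub_one_of_pos (show 0 < 1 + ε / R by positivity)
    linarith
  · have hs : 0 < 1 - μ := sub_pos.2 (lt_of_le_of_ne hμ.2 h1)
    simp only [radialGrowth, h1, if_false]
    rw [hfac, Real.mul_rpow hR.le (by positivity)]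
    have hb := rpow_one_add_le_one_add_mul_self (s := ε / R) (p := 1 - μ)
      (by linarith [div_pos hε hR]) hs.le (by linarith [hμ.1])
    have hpow : R ^ (1 - μ) = R * R ^ (-μ) := by
      rw [sub_eq_add_neg, Real.rpow_add hR, Real.rpow_one]
    calc R ^ (1 - μ) * (1 + ε / R) ^ (1 - μ) / (1 - μ)
        ≤ R ^ (1 - μ) * (1 + (1 - μ) * (ε / R)) / (1 - μ) := by gcongr
      _ = R ^ (1 - μ) / (1 - μ) + ε * R ^ (-μ) := by
          rw [hpow]; field_simp

lemma le_cw_of_exp_le {M : Type*} [MetricSpace M] [MeasurableSpace M] {vol : Measure M} {o : M}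
    {μ : ℝ} (hμ : μ ∈ Icc (0 : ℝ) 1) {w : M → ℝ} {Ω : Set M} {a C R₁ : ℝ}
    (h : ∀ R, R₁ ≤ R → ENNReal.ofReal (Real.exp (C + a * radialGrowth μ R)) ≤
      ∫⁻ x in ball o R ∩ Ω, ENNReal.ofReal (w x) ∂vol) :
    (a : EReal) ≤ cw vol o μ w Ω := by
  have hlog : ∀ R, R₁ ≤ R → ((C + a * radialGrowth μ R : ℝ) : EReal) ≤
      ENNReal.log (∫⁻ x in ball o R ∩ Ω, ENNReal.ofReal (w x) ∂vol) := fun R hR => by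
    have := ENNReal.log_monotone (h R hR)
    rwa [ENNReal.log_ofReal_of_pos (Real.exp_pos _), Real.log_exp] at this
  by_cases h1 : μ = 1
  · simp only [cw, h1, if_true]
    have hlim : Tendsto (fun R : ℝ => (((C + a * Real.log R) / Real.log R : ℝ) : EReal)) atTop
        (𝓝 (a : EReal)) := by
      refine (continuous_coe_real_ereal.tendsto a).comp ?_
      have h2 := (Real.tendsto_log_atTop.const_div_atTop C).add_const a
      rw [zero_add] at h2
      refine h2.congr' ?_
      filter_upwards [eventually_gt_atTop 1] with R hR
      have := (Real.log_pos hR).ne'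
      field_simp
    rw [← hlim.liminf_eq]
    refine liminf_le_liminf ?_
    filter_upwards [eventually_ge_atTop R₁, eventually_gt_atTop 1] with R hR hR1
    have := hlog R hR
    simp only [radialGrowth, h1, if_true] at this
    rw [EReal.coe_div]
    exact EReal.div_le_div_right_of_nonneg (EReal.coe_nonneg.2 (Real.log_pos hR1).le) this
  · have hs : 0 < 1 - μ := sub_pos.2 (lt_of_le_of_ne hμ.2 h1)
    simp only [cw, h1, if_false]
    have hlim : Tendsto (fun R : ℝ => (((1 - μ) * (C + a * (R ^ (1 - μ) / (1 - μ))) /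
        R ^ (1 - μ) : ℝ) : EReal)) atTop (𝓝 (a : EReal)) := by
      refine (continuous_coe_real_ereal.tendsto a).comp ?_
      have h2 := ((tendsto_rpow_atTop hs).const_div_atTop ((1 - μ) * C)).add_const a
      rw [zero_add] at h2
      refine h2.congr' ?_
      filter_upwards [eventually_gt_atTop 0] with R hR
      have := (Real.rpow_pos_of_pos hR (1 - μ)).ne'
      field_simp
    rw [← hlim.liminf_eq]
    refine liminf_le_liminf ?_
    filter_upwards [eventually_ge_atTop R₁, eventually_gt_atTop 0] with R hR hR0
    have := hlog R hR
    simp only [radialGrowth, h1, if_false] at this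
    rw [EReal.coe_div, EReal.coe_mul]
    exact EReal.div_le_div_right_of_nonneg (EReal.coe_nonneg.2 (Real.rpow_pos_of_pos hR0 _).le)
      (mul_le_mul_of_nonneg_left this (EReal.coe_nonneg.2 hs.le))

lemma exists_le_of_condB {M : Type*} [MetricSpace M] {o : M} {μ β β' : ℝ} {b : M → ℝ}
    (hB : CondB o μ β b) (hβ : β' < β) :
    ∃ R₀ : ℝ, ∀ x, R₀ ≤ dist o x → 0 < dist o x → β' * dist o x ^ (-μ) ≤ b x := by
  by_cases h0 : μ = 0
  · simp only [CondB, h0, if_true] at hB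
    exact ⟨0, fun x _ _ => by simpa [h0] using hβ.le.trans (hB x)⟩
  · simp only [CondB, h0, if_false] at hB
    have hev := eventually_lt_of_lt_liminf ((EReal.coe_lt_coe_iff.2 hβ).trans_le hB)
    rw [eventually_comap] at hev
    obtain ⟨R₀, hR₀⟩ := eventually_atTop.1 hev
    refine ⟨R₀, fun x hx hpos => ?_⟩
    have h1 := EReal.coe_lt_coe_iff.1 (hR₀ _ hx x rfl)
    rw [Real.rpow_neg hpos.le, ← div_eq_mul_inv, div_le_iff₀ (Real.rpow_pos_of_pos hpos _),
      mul_comm]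
    exact h1.le

end Growth

section Conclusion

section MetricMeasure

variable {M : Type*} [MetricSpace M] [MeasurableSpace M] [BorelSpace M] {vol : Measure M} {o : M}
  {μ : ℝ} {w : M → ℝ} {Ω : Set M}

lemma cw_nonneg [vol.IsOpenPosMeasure] (hμ : μ ∈ Icc (0 : ℝ) 1) (hΩ : IsOpen Ω)
    (hΩne : Ω.Nonempty) (hw : ContinuousOn w Ω) (hwpos : ∀ x ∈ Ω, 0 < w x) :
    0 ≤ cw vol o μ w Ω := by
  obtain ⟨x₀, hx₀⟩ := hΩne
  set R₁ := dist x₀ o + 1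
  have hU : IsOpen (ball o R₁ ∩ Ω) := isOpen_ball.inter hΩ
  have hne : ∫⁻ x in ball o R₁ ∩ Ω, ENNReal.ofReal (w x) ∂vol ≠ 0 := by
    have hm : AEMeasurable (fun x => ENNReal.ofReal (w x)) (vol.restrict (ball o R₁ ∩ Ω)) :=
      ((hw.mono inter_subset_right).aemeasurable hU.measurableSet).ennreal_ofReal
    rw [Ne, lintegral_eq_zero_iff' hm]
    intro h0
    have h1 := (ae_restrict_iff' hU.measurableSet).1 h0
    have h2 : vol (ball o R₁ ∩ Ω) = 0 := by
      have h3 : ball o R₁ ∩ Ω ⊆ {x | x ∈ ball o R₁ ∩ Ω → ENNReal.ofReal (w x) = 0}ᶜ :=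
        fun x hx hxx => (ENNReal.ofReal_pos.2 (hwpos x hx.2)).ne' (hxx hx)
      exact measure_mono_null h3 h1
    exact hU.measure_ne_zero vol ⟨x₀, by simp [R₁], hx₀⟩ h2
  obtain ⟨t, ht0, ht⟩ := ENNReal.lt_iff_exists_nnreal_btwn.1 (pos_iff_ne_zero.2 hne)
  have ht0' : (0 : ℝ) < t := by exact_mod_cast ht0
  have := le_cw_of_exp_le (vol := vol) (o := o) (w := w) (Ω := Ω) hμ (a := 0) (C := Real.log t)
    (R₁ := R₁) fun R hR => by
      rw [zero_mul, add_zero, Real.exp_log ht0', ENNReal.ofReal_coe_nnreal]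
      exact ht.le.trans (lintegral_mono_set (inter_subset_inter_left _ (ball_subset_ball hR)))
  simpa using this

lemma le_cw_of_flux_le [ProperSpace M] [IsLocallyFiniteMeasure vol] [vol.IsOpenPosMeasure]
    (hμ : μ ∈ Icc (0 : ℝ) 1) (hΩ : IsOpen Ω) {ρ b : M → ℝ} (hρc : Continuous ρ) (hρ0 : ∀ x, 0 ≤ ρ x)
    (hρw : ∀ x, ENNReal.ofReal (ρ x) ≤ Ω.indicator (fun x => ENNReal.ofReal (w x)) x)
    (hρpos : ∃ x, 0 < ρ x) (hb : Continuous b) (hbpos : ∀ x, 0 < b x) {γ k c R₀ : ℝ} (hγ : 0 < γ)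
    (hk : 0 < k) (hc : 0 ≤ c)
    (hbR : ∀ x, R₀ ≤ dist o x → 0 < dist o x → c * k / γ * dist o x ^ (-μ) ≤ b x)
    (hflux : ∀ R ε : ℝ, 0 < ε → γ * ∫ x in ball o R, b x * ρ x ∂vol ≤
      k / ε * (∫ x in ball o (R + ε), ρ x ∂vol - ∫ x in ball o R, ρ x ∂vol)) :
    (c : EReal) ≤ cw vol o μ w Ω := by
  obtain ⟨x₀, hx₀⟩ := hρpos
  set S₀ := max (max R₀ 1) (dist x₀ o + 1)
  have hS₀1 : 1 ≤ S₀ := (le_max_right _ _).trans (le_max_left _ _)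
  have hS₀R : R₀ ≤ S₀ := (le_max_left _ _).trans (le_max_left _ _)
  have hx₀S : x₀ ∈ ball o S₀ := by
    rw [mem_ball]
    exact (lt_add_one _).trans_le (le_max_right _ _)
  have hint : ∀ {f : M → ℝ}, Continuous f → ∀ R, IntegrableOn f (ball o R) vol := fun hf R =>
    (hf.continuousOn.integrableOn_compact (isCompact_closedBall o R)).mono_set
      ball_subset_closedBall
  set G : ℝ → ℝ := fun R => ∫ x in ball o R, ρ x ∂vol with hG
  have hbρ0 : ∀ x, 0 ≤ b x * ρ x := fun x => mul_nonneg (hbpos x).le (hρ0 x)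
  have hsub : ∀ R, S₀ ≤ R → ∫ x in ball o R \ ball o S₀, ρ x ∂vol = G R - G S₀ := fun R hR =>
    setIntegral_sdiff measurableSet_ball (hint hρc R) (ball_subset_ball hR)
  have hlow : ∀ R, S₀ ≤ R →
      c * k / γ * R ^ (-μ) * (G R - G S₀) ≤ ∫ x in ball o R, b x * ρ x ∂vol := by
    intro R hR
    have hRpos : 0 < R := by linarith
    rw [← hsub R hR, ← integral_const_mul]
    calc ∫ x in ball o R \ ball o S₀, c * k / γ * R ^ (-μ) * ρ x ∂vol
        ≤ ∫ x in ball o R \ ball o S₀, b x * ρ x ∂vol := by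
          refine setIntegral_mono_on (((hint hρc R).mono_set sdiff_subset).const_mul _)
            ((hint (hb.mul hρc) R).mono_set sdiff_subset)
            (measurableSet_ball.diff measurableSet_ball) fun x hx => ?_
          have h1 : dist o x < R := by simpa [dist_comm] using hx.1
          have h2 : S₀ ≤ dist o x := by simpa [dist_comm] using hx.2
          have h3 : 0 < dist o x := by linarith
          refine mul_le_mul_of_nonneg_right (le_trans ?_ (hbR x (hS₀R.trans h2) h3)) (hρ0 x)
          exact mul_le_mul_of_nonneg_left
            (Real.rpow_le_rpow_of_nonpos h3 h1.le (by linarith [hμ.1])) (by positivity)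
      _ ≤ ∫ x in ball o R, b x * ρ x ∂vol :=
          setIntegral_mono_set (hint (hb.mul hρc) R) (Eventually.of_forall hbρ0)
            sdiff_subset.eventuallyLE
  have hpos : 0 < ∫ x in ball o S₀, b x * ρ x ∂vol := by
    rw [setIntegral_pos_iff_support_of_nonneg_ae (Eventually.of_forall hbρ0)
      (hint (hb.mul hρc) S₀)]
    exact ((hb.mul hρc).isOpen_support.inter isOpen_ball).measure_pos vol
      ⟨x₀, (mul_pos (hbpos x₀) hx₀).ne', hx₀S⟩
  have hH1 : 0 < G (S₀ + 1) - G S₀ := by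
    have h1 := (mul_pos hγ hpos).trans_le (hflux S₀ 1 one_pos)
    rw [div_one] at h1
    exact pos_of_mul_pos_right h1 hk.le
  have hH0 : ∀ R, S₀ ≤ R → 0 ≤ G R - G S₀ := fun R hR => by
    rw [← hsub R hR]
    exact integral_nonneg hρ0
  have hgrow : ∀ S, S₀ + 1 ≤ S → (G (S₀ + 1) - G S₀) * Real.exp (c * radialGrowth μ S -
      c * radialGrowth μ (S₀ + 1)) ≤ G S - G S₀ := by
    intro S hS
    refine exp_growth_of_increment_le (H := fun R => G R - G S₀)
      (A := fun R => c * radialGrowth μ R) (a := fun R => c * R ^ (-μ)) (a₁ := c)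
      (fun R hR => hH0 R (by linarith)) (fun R hR => ?_) (fun R hR => ?_) (fun R hR ε hε => ?_) (fun R hR ε hε => ?_) hS
    · exact mul_nonneg hc (Real.rpow_nonneg (by linarith) _)
    · exact mul_le_of_le_one_right hc
        (Real.rpow_le_one_of_one_le_of_nonpos (by linarith) (by linarith [hμ.1]))
    · have := mul_le_mul_of_nonneg_left
        (radialGrowth_add_le hμ (show 0 < R by linarith) hε) hc
      linarith
    · have h1 := (mul_le_mul_of_nonneg_left (hlow R (by linarith)) hγ.le).trans (hflux R ε hε)
      have h2 := mul_le_mul_of_nonneg_left h1 (show 0 ≤ ε / k by positivity)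
      have h3 : ε / k * (γ * (c * k / γ * R ^ (-μ) * (G R - G S₀))) =
          ε * (c * R ^ (-μ)) * (G R - G S₀) := by field_simp
      have h4 : ε / k * (k / ε * (G (R + ε) - G R)) = G (R + ε) - G R := by field_simp
      rw [h3] at h2
      linarith [h2.trans_eq h4]
  refine le_cw_of_exp_le hμ (R₁ := S₀ + 1)
    (C := Real.log (G (S₀ + 1) - G S₀) - c * radialGrowth μ (S₀ + 1)) fun R hR => ?_
  have hG0 : 0 ≤ G S₀ := integral_nonneg hρ0
  calc ENNReal.ofReal (Real.exp (Real.log (G (S₀ + 1) - G S₀) - c * radialGrowth μ (S₀ + 1) +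
        c * radialGrowth μ R)) ≤ ENNReal.ofReal (G R) := by
        refine ENNReal.ofReal_le_ofReal (le_trans (le_of_eq ?_)
          ((hgrow R hR).trans (by linarith)))
        rw [sub_add, Real.exp_sub, Real.exp_log hH1, div_eq_mul_inv, ← Real.exp_neg, neg_sub]
    _ = ∫⁻ x in ball o R, ENNReal.ofReal (ρ x) ∂vol :=
        ofReal_integral_eq_lintegral_ofReal (hint hρc R) (Eventually.of_forall hρ0)
    _ ≤ ∫⁻ x in ball o R, Ω.indicator (fun x => ENNReal.ofReal (w x)) x ∂vol :=
        lintegral_mono hρw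
    _ ≤ ∫⁻ x in ball o R ∩ Ω, ENNReal.ofReal (w x) ∂vol := by
        rw [inter_comm, ← Measure.restrict_restrict hΩ.measurableSet]
        exact lintegral_indicator_le _ _

end MetricMeasure

end Conclusion

end RiemDrift

end

theorem stmt4 {m : ℕ} (hm : 2 ≤ m)
    {M : Type*} [MetricSpace M] [ChartedSpace (RiemDrift.Euc m) M] [IsManifold (𝓡 m) ∞ M]
    [RiemannianBundle (fun x : M => TangentSpace (𝓡 m) x)]
    [IsContMDiffRiemannianBundle (𝓡 m) ∞ (RiemDrift.Euc m) (fun x : M => TangentSpace (𝓡 m) x)]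
    [IsRiemannianManifold (𝓡 m) M]
    [ConnectedSpace M] [CompleteSpace M] [NoncompactSpace M]
    [MeasurableSpace M] [BorelSpace M]
    (o : M) (Ω : Set M) (hΩ : IsOpen Ω) (hΩne : Ω.Nonempty)
    (X : ∀ x : M, TangentSpace (𝓡 m) x)
    (hX : ContMDiffOn (𝓡 m) (𝓡 m).tangent 1
      (fun x => (⟨x, X x⟩ : TangentBundle (𝓡 m) M)) Ω)
    (k : ℝ) (hk : 0 < k) (hXk : ∀ x ∈ Ω, ‖X x‖ ≤ k)
    (μ β : ℝ) (hμ : μ ∈ Icc (0 : ℝ) 1) (hβ : 0 < β)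
    (b : M → ℝ) (hb : Continuous b) (hbpos : ∀ x, 0 < b x) (hB : RiemDrift.CondB o μ β b)
    (ψ : M → ℝ) (hψ : ContMDiffOn (𝓡 m) 𝓘(ℝ, ℝ) 1 ψ Ω) (hψc : ContinuousOn ψ (closure Ω))
    (hmon : ∀ x ∈ Ω, 0 ≤ inner ℝ (RiemDrift.rgrad ψ x) (X x))
    (h : M → ℝ) (hh : ContMDiffOn (𝓡 m) 𝓘(ℝ, ℝ) 1 h Ω)
    (hdiv : ∀ x ∈ Ω, b x * ψ x ≤ RiemDrift.driftDiv h X x) :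
    (⨆ x ∈ Ω, (ψ x : EReal)) ≤
      max (((k / β : ℝ) : EReal) *
          RiemDrift.cw (RiemDrift.rvol m M) o μ (fun x => Real.exp (-h x)) Ω)
        (⨆ x ∈ frontier Ω, (ψ x : EReal)) := by

  have hprop : ProperSpace M := ⟨RiemDrift.isCompact_closedBall_of_complete m⟩
  have hfin := RiemDrift.isLocallyFiniteMeasure_rvol (m := m) (M := M)
  have hopen := RiemDrift.isOpenPosMeasure_rvol (m := m) (M := M)
  set T := RiemDrift.cw (RiemDrift.rvol m M) o μ (fun x => Real.exp (-h x)) Ω with hT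
  have hT0 : 0 ≤ T := RiemDrift.cw_nonneg hμ hΩ hΩne hh.continuousOn.neg.rexp
    fun x _ => Real.exp_pos _
  have hkβ : (0 : EReal) ≤ ((k / β : ℝ) : EReal) := EReal.coe_nonneg.2 (div_pos hk hβ).le
  by_contra hcon
  obtain ⟨x₀, hx₀⟩ := lt_iSup_iff.1 (not_le.1 hcon)
  obtain ⟨hx₀Ω, hx₀⟩ := lt_iSup_iff.1 hx₀
  obtain ⟨γ, hγ1, hγ2⟩ := EReal.lt_iff_exists_real_btwn.1 hx₀
  have hγT := (le_max_left _ _).trans_lt hγ1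
  have hγpos : 0 < γ := by
    exact_mod_cast (mul_nonneg hkβ hT0).trans_lt hγT
  have hγfr : ∀ x ∈ frontier Ω, ψ x < γ := fun x hx => EReal.coe_lt_coe_iff.1
    ((le_iSup₂ (f := fun x (_ : x ∈ frontier Ω) => (ψ x : EReal)) x hx).trans_lt
      ((le_max_right _ _).trans_lt hγ1))
  have hTlt : T < ((γ * β / k : ℝ) : EReal) := by
    by_contra hle
    have h1 := mul_le_mul_of_nonneg_left (not_lt.1 hle) hkβ
    rw [← EReal.coe_mul, show k / β * (γ * β / k) = γ by field_simp] at h1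
    exact (h1.trans_lt hγT).false
  obtain ⟨c, hc1, hc2⟩ := EReal.lt_iff_exists_real_btwn.1 hTlt
  have hc0 : 0 ≤ c := by
    exact_mod_cast (hT0.trans_lt hc1).le
  have hcβ : c * k / γ < β := by
    have h1 := EReal.coe_lt_coe_iff.1 hc2
    rw [lt_div_iff₀ hk] at h1
    rw [div_lt_iff₀ hγpos]
    linarith
  obtain ⟨R₀, hR₀⟩ := RiemDrift.exists_le_of_condB hB hcβ
  refine hc1.not_ge (RiemDrift.le_cw_of_flux_le hμ hΩ
    (RiemDrift.continuous_truncWeight hΩ hψ hψc hh hγfr) RiemDrift.truncWeight_nonneg (fun x => ?_)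
    ⟨x₀, RiemDrift.truncWeight_pos hx₀Ω (EReal.coe_lt_coe_iff.1 hγ2)⟩ hb hbpos hγpos hk hc0 hR₀
    fun R ε hε => RiemDrift.flux_inequality hΩ hX hψ hψc hγpos.le hγfr hh hXk hmon hb hbpos hdiv hε)
  by_cases hx : x ∈ Ω
  · rw [indicator_of_mem hx]
    exact ENNReal.ofReal_le_ofReal (RiemDrift.truncWeight_le hx)
  · simp [RiemDrift.truncWeight, hx]
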